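/- arXiv:2402.18939 — 2 statements merged into one kernel-verified Lean document; each statement's English description precedes it below -/
import Mathlib

section
/- Theorem 6: With the reduced form Q, parameters d = (8|D|)^{1/5}, m, K as in the context, suppose the reals c_1, …, c_5 satisfy c_2 ∈ ℤ, and suppose a < 1/2, d ≤ 1, a + d ≤ 1, and (m, K) = (2,1). Let a_4′ and a_5′ denote the unique representatives in (−1/2, 1/2] of a_4 − a_3h_4 and a_5 − a_3h_5 modulo 1. If it is not the case that simultaneously A = 1/3, t = 1/4, λ = 1/2, c_5 ∈ ℤ, a_5′ − a_4′/2 ∈ ℤ, and d + 6d⁵ < 2/3, then there exist x_1, …, x_5 with x_i − c_i ∈ ℤ for every i such that 0 < Q(x_1,…,x_5) < d. -/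
/-- The positive definite ternary form of the Birch reduction. -/
noncomputable def redPhi (a A t lam h₄ h₅ : ℝ) (u v w : ℝ) : ℝ :=
  a * (u + h₄*v + h₅*w)^2 + A * (v + lam*w)^2 + t * w^2

/-- The Birch-reduced indefinite quadratic form of type (1,4). -/
noncomputable def redQ (a A t lam h₄ h₅ a₂ a₃ a₄ a₅ : ℝ) (x₁ x₂ x₃ x₄ x₅ : ℝ) : ℝ :=
  (x₁ + a₂*x₂ + a₃*x₃ + a₄*x₄ + a₅*x₅) * x₂ - redPhi a A t lam h₄ h₅ x₃ x₄ x₅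

/-!
Fix `x₂ = e` and complete the square: up to a shift of `(x₃, x₄, x₅)` by a multiple of `e`, the
form becomes `(x₁ + κ e) e - φ`. Suppose that no value of `Q` falls in `(0, d)`. Writing
`φ = a (u + h₄ v + h₅ w)² + ψ(v, w)`, a covering argument in `u` shows that for `e = ±1` the
constants `B - ψ`, with `(v, w)` running over a coset of `ℤ²`, all lie modulo `1` in an arc of
length less than `6/13`. Along a line they form a quadratic sequence with second difference `-2A`,
and counting its carries forces `A` to be `1/2`, `1/3` or `3/10`, the last being excluded by the
size of `d`. Then `ψ` is the form of a square or of a hexagonal lattice, the coset is that of the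
deep holes or the lattice itself, respectively, and `h₄`, `h₅` are integers.
If `P₁`, `P₋₁` are the shifts and `B₁`, `B₋₁` the constants of the slices `e = ±1`, then the slice
`e = 2` has shift `(3 P₁ - P₋₁) / 2` and constant `3 B₁ + B₋₁`. It is therefore known up to finitely
many residues modulo `2`, and in each case suitable values of `ψ` contradict the covering argument
for this slice.
-/

open Set

theorem exists_int_abs_add_mem_Icc (s : ℝ) (k : ℕ) :
    ∃ n : ℤ, |s + n| ∈ Icc ((k : ℝ) / 2) ((k + 1) / 2) := by
  obtain ⟨n, hn, -⟩ := existsUnique_add_zsmul_mem_Ico one_pos s ((k : ℝ) / 2)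
  rw [zsmul_one, mem_Ico] at hn
  have hk : (0 : ℝ) ≤ k / 2 := by positivity
  rcases le_total (s + n) ((k + 1) / 2) with h | h
  · exact ⟨n, by rwa [abs_of_nonneg (hk.trans hn.1), mem_Icc, and_iff_right hn.1]⟩
  · refine ⟨n - (k + 1), ?_⟩
    push_cast
    rw [abs_of_nonpos (by linarith)]
    constructor <;> linarith

/-- The one-variable problem left after fixing all coordinates but `x₃`: no value
`B - a (s + k) ^ 2` with `k` an integer lies in the window `(0, d)`. -/
def MissesWindow (a d s B : ℝ) : Prop :=
  ∀ k : ℤ, B - a * (s + k) ^ 2 ∉ Ioo 0 d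

namespace MissesWindow

variable {a d s B B' : ℝ}

theorem add_int_iff (k : ℤ) : MissesWindow a d (s + k) B ↔ MissesWindow a d s B := by
  refine ⟨fun h n => ?_, fun h n => ?_⟩
  · simpa using h (n - k)
  · simpa [add_assoc] using h (k + n)

theorem neg_iff : MissesWindow a d (-s) B ↔ MissesWindow a d s B := by
  have key {s : ℝ} (h : MissesWindow a d s B) : MissesWindow a d (-s) B := fun n => by
    have h' := h (-n)
    rwa [Int.cast_neg, ← neg_sq, neg_add, neg_neg] at h'
  exact ⟨fun h => by simpa using key h, key⟩

theorem abs_sub_round_iff : MissesWindow a d |s - round s| B ↔ MissesWindow a d s B := by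
  have h : MissesWindow a d (s - round s) B ↔ MissesWindow a d s B := by
    simpa [sub_eq_add_neg] using add_int_iff (s := s) (-round s)
  rcases abs_choice (s - round s) with h' | h' <;> rw [h']
  · exact h
  · exact neg_iff.trans h

/-- Some `s + n` has absolute value in `[k / 2, (k + 1) / 2]`, so both hypotheses on `B` and `B'`
are decided at the same point. -/
theorem le_sub (ha : 0 < a) (h : MissesWindow a d s B) (h' : MissesWindow a d s B') (k : ℕ)
    (hB : B < d + a * k ^ 2 / 4) (hB' : a * (k + 1) ^ 2 / 4 < B') : d ≤ B' - B := by
  obtain ⟨n, hlo, hhi⟩ := exists_int_abs_add_mem_Icc s k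
  have := k.cast_nonneg (α := ℝ)
  have hsq_lo : k ^ 2 / 4 ≤ (s + n) ^ 2 := by rw [← sq_abs (s + n)]; nlinarith
  have hsq_hi : (s + n) ^ 2 ≤ (k + 1) ^ 2 / 4 := by rw [← sq_abs (s + n)]; nlinarith
  have hlt : B - a * (s + n) ^ 2 < d := by nlinarith
  have hpos : 0 < B' - a * (s + n) ^ 2 := by nlinarith
  have hnonpos : B - a * (s + n) ^ 2 ≤ 0 := not_lt.mp fun hB₀ => h n ⟨hB₀, hlt⟩
  have hge : d ≤ B' - a * (s + n) ^ 2 := not_lt.mp fun hBd => h' n ⟨hpos, hBd⟩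
  linarith

theorem notMem_Ioo (ha : 0 < a) (hd : 0 < d) (h : MissesWindow a d s B) (m : ℕ)
    (hm : m * a < d) : B ∉ Ioo (a / 4) (d + m ^ 2 * a / 4) := by
  rintro ⟨hlo, hhi⟩
  induction m with
  | zero =>
    have := h.le_sub ha h 0 (by simpa using hhi) (by simpa using hlo)
    linarith
  | succ m ih =>
    push_cast at hm hhi
    rcases lt_or_ge B (d + m ^ 2 * a / 4) with hB | hB
    · exact ih (by linarith) hB
    · have := h.le_sub ha h (m + 1) (by push_cast; linarith) (by push_cast; nlinarith)
      linarith

theorem abs_sub_round_lt (ha : 0 < a) (had : 2 * a < d) (h : MissesWindow a d s B)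
    (hlo : d + a ≤ B) (hhi : B < d + 9 * a / 4) : |s - round s| < 1 / 6 := by
  have hr : |s - round s| ≤ 1 / 2 := abs_sub_round s
  have hr₀ : 0 ≤ |s - round s| := abs_nonneg _
  rw [← abs_sub_round_iff] at h
  set r := |s - round s|
  by_contra! hr₆
  have hge : d ≤ B - a * (r + 1) ^ 2 := by
    refine not_lt.mp fun hlt => h 1 ⟨?_, by simpa using hlt⟩
    have : (r + 1) ^ 2 ≤ 9 / 4 := by nlinarith
    push_cast
    nlinarith
  have hlt : B - a * (r + (-2 : ℤ)) ^ 2 < d := by push_cast; nlinarith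
  refine h (-2) ⟨?_, hlt⟩
  push_cast
  nlinarith

end MissesWindow

/-- `x` lies modulo `1` in the arc `[lo, hi]`. -/
def MemArc (lo hi x : ℝ) : Prop :=
  ∃ N : ℤ, x - N ∈ Icc lo hi

section Arc

variable {a d s B : ℝ}

theorem MissesWindow.memArc (ha : 0 < a) (hd : 0 < d) (m : ℕ) (hm : m * a < d)
    (h : ∀ k : ℤ, MissesWindow a d s (B + k)) : MemArc (d + m ^ 2 * a / 4) (1 + a / 4) B := by
  obtain ⟨N, ⟨hlo, hhi⟩, -⟩ := existsUnique_sub_zsmul_mem_Ioc one_pos B (a / 4)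
  rw [zsmul_one] at hlo hhi
  have hN : MissesWindow a d s (B - N) := by simpa [sub_eq_add_neg] using h (-N)
  exact ⟨N, not_lt.mp fun hlt => hN.notMem_Ioo ha hd m hm ⟨hlo, hlt⟩, by linarith⟩

theorem MissesWindow.memArc_of_one_lt (ha : 0 < a) (had : 2 * a < d) (hd : 1 < d + 2 * a)
    (h : ∀ k : ℤ, MissesWindow a d s (B + k)) : MemArc (d + a) (1 + a / 36) B := by
  obtain ⟨N, hlo, hhi⟩ := MissesWindow.memArc ha (by linarith) 2 (by exact_mod_cast had) h
  push_cast at hlo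
  have hN : MissesWindow a d s (B - N) := by simpa [sub_eq_add_neg] using h (-N)
  have hr := hN.abs_sub_round_lt ha had (by linarith) (by linarith)
  have hsq : (s - round s) ^ 2 ≤ 1 / 36 := by rw [← sq_abs]; nlinarith [abs_nonneg (s - round s)]
  refine ⟨N, by linarith, not_lt.mp fun hlt => h (-N - 1) (-round s) ?_⟩
  push_cast
  rw [← sub_eq_add_neg s]
  constructor <;> nlinarith [sq_nonneg (s - round s)]

theorem MemArc.trim_right {lo hi x c : ℝ} (hx : MemArc lo hi x) (hxc : MemArc lo hi (x + c))
    (hc : 0 ≤ c) (hlen : hi - lo < 1 - c) : MemArc lo (hi - c) x := by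
  obtain ⟨N, hNlo, hNhi⟩ := hx
  obtain ⟨N', hN'lo, hN'hi⟩ := hxc
  obtain rfl : N = N' := by
    have h₁ : N' < N + 1 := by rify; linarith
    have h₂ : N < N' + 1 := by rify; linarith
    lia
  exact ⟨N, hNlo, by linarith⟩

end Arc

section Drift

theorem eq_zero_of_bounded_of_map_add_sub_eq {G : Type*} [AddMonoid G] {E : G → ℝ} {w : G}
    {C δ : ℝ} (hbdd : ∀ n, |E n| ≤ C) (hδ : ∀ n, E (n + w) - E n = δ) : δ = 0 := by
  let f : AddConstMap G ℝ w δ := ⟨E, fun n => by linarith [hδ n]⟩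
  have hf (k : ℕ) : E (k • w) = E 0 + k * δ := by
    rw [← nsmul_eq_mul]
    exact AddConstMapClass.map_nsmul_const f k
  by_contra hne
  obtain ⟨k, hk⟩ := exists_nat_gt (2 * C / |δ|)
  rw [div_lt_iff₀ (abs_pos.mpr hne)] at hk
  have hkδ : k * |δ| ≤ 2 * C := calc
    k * |δ| = |E (k • w) - E 0| := by rw [hf, add_sub_cancel_left, abs_mul, Nat.abs_cast]
    _ ≤ |E (k • w)| + |E 0| := abs_sub _ _
    _ ≤ 2 * C := by linarith [hbdd (k • w), hbdd 0]
  linarith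

variable {F g : ℤ → ℝ} {C δ lo hi : ℝ}

theorem exists_int_eq_of_bounded_of_abs_sub_lt (hbdd : ∀ n, |F n| ≤ C)
    (hstep : ∀ n, |F (n + 1) - F n| < 1 / 2) (hδ : ∀ n, ∃ k : ℤ, F (n + 1) - F n = δ + k) :
    ∃ k : ℤ, δ = k := by
  choose k hk using hδ
  have hconst (n : ℤ) : k n = k 0 := by
    have hn := abs_lt.mp (hk n ▸ hstep n)
    have h₀ := abs_lt.mp (hk 0 ▸ hstep 0)
    have h₁ : k n < k 0 + 1 := by rify; linarith
    have h₂ : k 0 < k n + 1 := by rify; linarith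
    lia
  have := eq_zero_of_bounded_of_map_add_sub_eq hbdd (w := 1) fun n => by rw [hk n, hconst n]
  exact ⟨-k 0, by push_cast; linarith⟩

theorem exists_int_eq_of_memArc_of_sub (hg : ∀ n, MemArc lo hi (g n)) (hlen : hi - lo < 1 / 2)
    (hδ : ∀ n, ∃ k : ℤ, g (n + 1) - g n = δ + k) : ∃ k : ℤ, δ = k := by
  choose N hlo hhi using hg
  refine exists_int_eq_of_bounded_of_abs_sub_lt (F := fun n => g n - N n)
    (fun n => abs_le_max_abs_abs (hlo n) (hhi n)) (fun n => ?_) fun n => ?_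
  · rw [abs_lt]
    constructor <;> linarith [hlo n, hhi n, hlo (n + 1), hhi (n + 1)]
  · obtain ⟨k, hk⟩ := hδ n
    exact ⟨k + N n - N (n + 1), by push_cast; linarith⟩

theorem exists_int_eq_of_memArc_of_second_diff (hg : ∀ n, MemArc lo hi (g n))
    (hlen : hi - lo < 1 / 4) (hδ : ∀ n, g (n + 2) - 2 * g (n + 1) + g n = δ) :
    ∃ k : ℤ, δ = k := by
  choose N hlo hhi using hg
  refine exists_int_eq_of_bounded_of_abs_sub_lt
    (F := fun n => (g (n + 1) - N (n + 1)) - (g n - N n)) (C := 1 / 4)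
    (fun n => abs_le.mpr ?_) (fun n => abs_lt.mpr ?_) fun n => ?_
  · constructor <;> linarith [hlo n, hhi n, hlo (n + 1), hhi (n + 1)]
  · constructor <;> linarith [hlo n, hhi n, hlo (n + 1), hhi (n + 1), hlo (n + 1 + 1),
      hhi (n + 1 + 1)]
  · have := hδ n
    rw [← one_add_one_eq_two, ← add_assoc] at this
    exact ⟨2 * N (n + 1) - N (n + 1 + 1) - N n, by push_cast; linarith⟩

end Drift

/-- The carries of a quadratic sequence with second difference `-2A` that stays modulo `1` in an
arc of length `l`: `F` is its position in the arc, and `p` counts how far the second difference of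
`F` falls short of `1 - 2A`. -/
structure CarrySequence (A l : ℝ) (F : ℤ → ℝ) (p : ℤ → ℤ) : Prop where
  mem_Icc : ∀ n, F n ∈ Icc 0 l
  second_diff : ∀ n, F (n + 2) - 2 * F (n + 1) + F n = 1 - p n - 2 * A

namespace CarrySequence

variable {A l : ℝ} {F : ℤ → ℝ} {p : ℤ → ℤ}

theorem second_diff_add (h : CarrySequence A l F p) (n i : ℤ) :
    F (n + (i + 2)) - 2 * F (n + (i + 1)) + F (n + i) = 1 - p (n + i) - 2 * A := by
  simpa only [add_assoc] using h.second_diff (n + i)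

theorem diff_add_sub_diff (h : CarrySequence A l F p) (k : ℕ) (n : ℤ) :
    (F (n + k + 1) - F (n + k)) - (F (n + 1) - F n) =
      k - (∑ i ∈ Finset.range k, p (n + i) : ℤ) - 2 * k * A := by
  induction k with
  | zero => simp
  | succ k ih =>
    have hk := h.second_diff (n + k)
    rw [Finset.sum_range_succ]
    push_cast at ih ⊢
    rw [← add_assoc, add_assoc (n + k), one_add_one_eq_two]
    linear_combination ih + hk

theorem sub_eq_of_forall_sum_eq (h : CarrySequence A l F p) (k : ℕ) {S : ℤ}
    (hS : ∀ n, ∑ i ∈ Finset.range k, p (n + i) = S) : (k - S : ℝ) = 2 * k * A := by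
  have hbdd (n : ℤ) : |F (n + 1) - F n| ≤ l := by
    have h₀ := h.mem_Icc n
    have h₁ := h.mem_Icc (n + 1)
    exact abs_le.mpr ⟨by linarith [h₀.2, h₁.1], by linarith [h₀.1, h₁.2]⟩
  have := eq_zero_of_bounded_of_map_add_sub_eq hbdd (w := (k : ℤ)) fun n => by
    rw [h.diff_add_sub_diff, hS]
  linarith

/-! Each of the following bounds comes from adding second differences with suitable weights. -/

theorem nonneg (h : CarrySequence A l F p) (hAl : A + l < 1) (n : ℤ) : 0 ≤ p n := by
  have h₀ := h.second_diff n
  have hlt : -1 < p n := by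
    rify
    linarith [(h.mem_Icc n).2, (h.mem_Icc (n + 1)).1, (h.mem_Icc (n + 2)).2]
  lia

theorem nonpos (h : CarrySequence A l F p) (hAl : l < A) (n : ℤ) : p n ≤ 0 := by
  have h₀ := h.second_diff n
  have hlt : p n < 1 := by
    rify
    linarith [(h.mem_Icc n).1, (h.mem_Icc (n + 1)).2, (h.mem_Icc (n + 2)).1]
  lia

theorem add_le_one (h : CarrySequence A l F p) (hAl : l < 2 * A) (n : ℤ) :
    p n + p (n + 1) ≤ 1 := by
  have h₀ := h.second_diff n
  have h₁ := h.second_diff_add n 1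
  norm_num at h₁
  have hlt : p n + p (n + 1) < 2 := by
    rify
    linarith [(h.mem_Icc n).1, (h.mem_Icc (n + 1)).2, (h.mem_Icc (n + 2)).2,
      (h.mem_Icc (n + 3)).1]
  lia

theorem one_le_weighted_three (h : CarrySequence A l F p) (hAl : 4 * A + l < 2) (n : ℤ) :
    1 ≤ p n + 2 * p (n + 1) + p (n + 2) := by
  have h₀ := h.second_diff n
  have h₁ := h.second_diff_add n 1
  have h₂ := h.second_diff_add n 2
  norm_num at h₁ h₂
  have hlt : 0 < p n + 2 * p (n + 1) + p (n + 2) := by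
    rify
    linarith [(h.mem_Icc n).2, (h.mem_Icc (n + 2)).1, (h.mem_Icc (n + 4)).2]
  lia

theorem abs_weighted_five_le (h : CarrySequence A l F p) (n : ℤ) :
    |8 - 16 * A - ↑(p n + 2 * p (n + 1) + 2 * p (n + 2) + 2 * p (n + 3) + p (n + 4))|
      ≤ 2 * l := by
  have hsum : 8 - 16 * A - ↑(p n + 2 * p (n + 1) + 2 * p (n + 2) + 2 * p (n + 3) + p (n + 4))
      = F n - F (n + 2) - F (n + 4) + F (n + 6) := by
    have h₀ := h.second_diff n
    have h₁ := h.second_diff_add n 1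
    have h₂ := h.second_diff_add n 2
    have h₃ := h.second_diff_add n 3
    have h₄ := h.second_diff_add n 4
    norm_num at h₁ h₂ h₃ h₄
    push_cast
    linarith
  rw [hsum, abs_le]
  have h₀ := h.mem_Icc n
  have h₂ := h.mem_Icc (n + 2)
  have h₄ := h.mem_Icc (n + 4)
  have h₆ := h.mem_Icc (n + 6)
  exact ⟨by linarith [h₀.1, h₂.2, h₄.2, h₆.1], by linarith [h₀.2, h₂.1, h₄.1, h₆.2]⟩

theorem eight_mul_le (h : CarrySequence A l F p) (hp : ∀ n, 0 ≤ p n) {n : ℤ}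
    (hn : 2 ≤ p n + p (n + 2)) : 8 * A ≤ 2 + l := by
  have habs := (abs_le.mp (h.abs_weighted_five_le (n - 1))).1
  have hge : (4 : ℤ) ≤ p (n - 1) + 2 * p (n - 1 + 1) + 2 * p (n - 1 + 2) + 2 * p (n - 1 + 3)
      + p (n - 1 + 4) := by
    have h₁ := hp (n - 1)
    have h₂ := hp (n - 1 + 2)
    have h₄ := hp (n - 1 + 4)
    rw [sub_add_cancel, show n - 1 + 3 = n + 2 by ring]
    lia
  rify at hge habs
  linarith

theorem three_le_weighted_five (h : CarrySequence A l F p) (hA : 8 * A ≤ 2 + l) (hl : l < 1 / 2)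
    (n : ℤ) : 3 ≤ p n + 2 * p (n + 1) + 2 * p (n + 2) + 2 * p (n + 3) + p (n + 4) := by
  have habs := (abs_le.mp (h.abs_weighted_five_le n)).2
  have hlt : 2 < p n + 2 * p (n + 1) + 2 * p (n + 2) + 2 * p (n + 3) + p (n + 4) := by
    rify at habs ⊢
    linarith
  lia

theorem weighted_seven_le (h : CarrySequence A l F p) (hA : 1 ≤ 2 * A + l) (hl : l < 6 / 13)
    (n : ℤ) : 2 * p n + 3 * p (n + 1) + 4 * p (n + 2) + 4 * p (n + 3) + 4 * p (n + 4)
      + 3 * p (n + 5) + 2 * p (n + 6) ≤ 11 := by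
  have h₀ := h.second_diff n
  have h₁ := h.second_diff_add n 1
  have h₂ := h.second_diff_add n 2
  have h₃ := h.second_diff_add n 3
  have h₄ := h.second_diff_add n 4
  have h₅ := h.second_diff_add n 5
  have h₆ := h.second_diff_add n 6
  norm_num at h₁ h₂ h₃ h₄ h₅ h₆
  have hlt : 2 * p n + 3 * p (n + 1) + 4 * p (n + 2) + 4 * p (n + 3) + 4 * p (n + 4)
      + 3 * p (n + 5) + 2 * p (n + 6) < 12 := by
    rify
    linarith [(h.mem_Icc n).1, (h.mem_Icc (n + 1)).2, (h.mem_Icc (n + 3)).2,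
      (h.mem_Icc (n + 5)).2, (h.mem_Icc (n + 7)).2, (h.mem_Icc (n + 8)).1]
  lia

theorem neg_one_le_weighted_nine (h : CarrySequence A l F p) (hA : 8 * A ≤ 2 + l)
    (hl : l < 6 / 13) (n : ℤ) : -1 ≤ 2 * p n + p (n + 1) - p (n + 3) - 2 * p (n + 4) - p (n + 5)
      + p (n + 7) + 2 * p (n + 8) := by
  have h₀ := h.second_diff n
  have h₁ := h.second_diff_add n 1
  have h₃ := h.second_diff_add n 3
  have h₄ := h.second_diff_add n 4
  have h₅ := h.second_diff_add n 5
  have h₇ := h.second_diff_add n 7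
  have h₈ := h.second_diff_add n 8
  norm_num at h₁ h₃ h₄ h₅ h₇ h₈
  have hlt : -2 < 2 * p n + p (n + 1) - p (n + 3) - 2 * p (n + 4) - p (n + 5)
      + p (n + 7) + 2 * p (n + 8) := by
    rify
    linarith [(h.mem_Icc n).2, (h.mem_Icc (n + 1)).1, (h.mem_Icc (n + 5)).2,
      (h.mem_Icc (n + 9)).1, (h.mem_Icc (n + 10)).2]
  lia

theorem alternate_three_le_two (h : CarrySequence A l F p) (hp : ∀ n, 0 ≤ p n)
    (hp₁ : ∀ n, p n + p (n + 1) ≤ 1) (hA : 8 * A ≤ 2 + l) (hA' : 1 ≤ 2 * A + l)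
    (hl : l < 6 / 13) (n : ℤ) : p n + p (n + 2) + p (n + 4) ≤ 2 := by
  obtain ⟨k, rfl⟩ : ∃ k, n = k + 2 := ⟨n - 2, by ring⟩
  have hnine := h.neg_one_le_weighted_nine hA hl k
  have hseven := h.weighted_seven_le hA' hl k
  have hseven' := h.weighted_seven_le hA' hl (k + 2)
  have hadj (i : ℤ) : p (k + i) + p (k + (i + 1)) ≤ 1 := by
    simpa only [add_assoc] using hp₁ (k + i)
  have h₁ := hadj 1
  have h₂ := hadj 2
  have h₃ := hadj 3
  have h₄ := hadj 4
  have h₅ := hadj 5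
  have h₆ := hadj 6
  norm_num [add_assoc] at h₁ h₂ h₃ h₄ h₅ h₆ hseven' ⊢
  have := hp k
  have := hp (k + 1)
  have := hp (k + 3)
  have := hp (k + 5)
  have := hp (k + 7)
  have := hp (k + 8)
  lia

theorem sum_five_eq_two (h : CarrySequence A l F p) (hp : ∀ n, 0 ≤ p n)
    (hp₁ : ∀ n, p n + p (n + 1) ≤ 1) (hA : 8 * A ≤ 2 + l) (hA' : 1 ≤ 2 * A + l)
    (hl : l < 6 / 13) (n : ℤ) : ∑ i ∈ Finset.range 5, p (n + i) = 2 := by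
  have hfive := h.three_le_weighted_five hA (by linarith) n
  have halt := h.alternate_three_le_two hp hp₁ hA hA' hl n
  have hadj (i : ℤ) : p (n + i) + p (n + (i + 1)) ≤ 1 := by
    simpa only [add_assoc] using hp₁ (n + i)
  have h₀ := hp₁ n
  have h₁ := hadj 1
  have h₂ := hadj 2
  have h₃ := hadj 3
  norm_num at h₁ h₂ h₃
  have := hp n
  have := hp (n + 1)
  have := hp (n + 2)
  have := hp (n + 3)
  have := hp (n + 4)
  norm_num [Finset.sum_range_succ]
  lia

theorem sum_three_eq_one (h : CarrySequence A l F p) (hp : ∀ n, 0 ≤ p n)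
    (hp₁ : ∀ n, p n + p (n + 1) ≤ 1) (hp₂ : ∀ n, p n + p (n + 2) ≤ 1) (hA : 4 * A + l < 2)
    (n : ℤ) : ∑ i ∈ Finset.range 3, p (n + i) = 1 := by
  have hthree := h.one_le_weighted_three hA n
  have h₀ := hp₁ n
  have h₁ := hp₁ (n + 1)
  have h₂ := hp₂ n
  norm_num [add_assoc] at h₁
  have := hp n
  have := hp (n + 1)
  have := hp (n + 2)
  norm_num [Finset.sum_range_succ]
  lia

theorem eq_half_or_third_or_three_tenths (h : CarrySequence A l F p) (hl : l < 6 / 13)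
    (hA : 1 ≤ 2 * A + l) (hA' : A + l < 1) (hAl : A ≤ l → 4 * A + l < 2) :
    A = 1 / 2 ∨ A = 1 / 3 ∨ A = 3 / 10 ∧ 2 / 5 ≤ l := by
  have hp := h.nonneg hA'
  rcases lt_or_ge l A with hlt | hge
  · have hzero (n : ℤ) : p n = 0 := le_antisymm (h.nonpos hlt n) (hp n)
    have := h.sub_eq_of_forall_sum_eq 1 (S := 0) (by simpa using hzero)
    left
    norm_num at this
    linarith
  have hp₁ := h.add_le_one (by linarith)
  by_cases hgap : ∃ n, 2 ≤ p n + p (n + 2)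
  · obtain ⟨n, hn⟩ := hgap
    have h8 := h.eight_mul_le hp hn
    have := h.sub_eq_of_forall_sum_eq 5 (h.sum_five_eq_two hp hp₁ h8 hA hl)
    norm_num at this
    exact Or.inr (Or.inr ⟨by linarith, by linarith⟩)
  · have hp₂ (n : ℤ) : p n + p (n + 2) ≤ 1 := by
      have := not_exists.mp hgap n
      lia
    have := h.sub_eq_of_forall_sum_eq 3 (h.sum_three_eq_one hp hp₁ hp₂ (hAl hge))
    norm_num at this
    exact Or.inr (Or.inl (by linarith))

end CarrySequence

theorem eq_half_or_third_or_three_tenths_of_memArc {A lo hi : ℝ} {g : ℤ → ℝ}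
    (hg : ∀ n, MemArc lo hi (g n)) (hdiff : ∀ n, g (n + 2) - 2 * g (n + 1) + g n = -2 * A)
    (hlen : hi - lo < 6 / 13) (hA : 1 ≤ 2 * A + (hi - lo)) (hA' : A + (hi - lo) < 1)
    (hAl : A ≤ hi - lo → 4 * A + (hi - lo) < 2) :
    A = 1 / 2 ∨ A = 1 / 3 ∨ A = 3 / 10 ∧ 2 / 5 ≤ hi - lo := by
  choose N hN using hg
  have h : CarrySequence A (hi - lo) (fun n => g n - N n - lo)
      (fun n => 1 + (N (n + 2) - 2 * N (n + 1) + N n)) :=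
    { mem_Icc := fun n => ⟨by linarith [(hN n).1], by linarith [(hN n).2]⟩
      second_diff := fun n => by push_cast; linarith [hdiff n] }
  exact h.eq_half_or_third_or_three_tenths hlen hA hA' hAl

/-- The binary form left of `redPhi` once its square in `u` is split off. -/
def binForm (A t lam v w : ℝ) : ℝ :=
  A * (v + lam * w) ^ 2 + t * w ^ 2

/-- The conditions on the parameters of a reduced form with `(m, K) = (2, 1)` and `a + d ≤ 1`. -/
structure Admissible (a A t lam d : ℝ) : Prop where
  a_pos : 0 < a
  A_pos : 0 < A
  lam_nonneg : 0 ≤ lam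
  lam_le : lam ≤ 1 / 2
  A_le : A ≤ t + A * lam ^ 2
  d_pow : d ^ 5 = 2 * a * A * t
  two_mul_a_lt : 2 * a < d
  d_le : d ≤ 3 * a
  A_lt : A < d + 3 * a / 4
  le_two_mul_A : d + 3 * a / 4 ≤ 2 * A
  a_add_d_le : a + d ≤ 1

namespace Admissible

variable {a A t lam d : ℝ}

theorem d_pos (h : Admissible a A t lam d) : 0 < d := by linarith [h.a_pos, h.two_mul_a_lt]

theorem three_fourths_mul_A_le (h : Admissible a A t lam d) : 3 / 4 * A ≤ t := by
  have hlam : lam ^ 2 ≤ 1 / 4 := by nlinarith [h.lam_nonneg, h.lam_le]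
  nlinarith [h.A_le, h.A_pos]

theorem t_pos (h : Admissible a A t lam d) : 0 < t := by
  linarith [h.three_fourths_mul_A_le, h.A_pos]

theorem two_thirds_mul_le (h : Admissible a A t lam d) : 2 / 3 * (A * t) ≤ d ^ 4 := by
  have hAt : 0 < A * t := mul_pos h.A_pos h.t_pos
  have hmul : d * (2 / 3 * (A * t)) ≤ d * d ^ 4 := by
    rw [← pow_succ', h.d_pow]
    nlinarith [h.d_le]
  exact le_of_mul_le_mul_left hmul h.d_pos

theorem seven_tenths_mul_A_le (h : Admissible a A t lam d) : 7 / 10 * A ≤ d ^ 2 := by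
  refine le_of_sq_le_sq ?_ (sq_nonneg d)
  nlinarith [h.two_thirds_mul_le, h.three_fourths_mul_A_le, h.A_pos]

theorem le_d (h : Admissible a A t lam d) : 7 / 16 ≤ d := by
  nlinarith [h.seven_tenths_mul_A_le, h.le_two_mul_A, h.d_le, h.d_pos]

theorem d_le_three_fourths (h : Admissible a A t lam d) : d ≤ 3 / 4 := by
  linarith [h.d_le, h.a_add_d_le]

theorem arcLength_le (h : Admissible a A t lam d) : 1 + a / 4 - (d + a) ≤ 1 - 5 / 4 * d := by
  linarith [h.d_le]

theorem A_eq (h : Admissible a A t lam d) {g : ℤ → ℝ}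
    (hg : ∀ n, MemArc (d + a) (1 + a / 4) (g n))
    (hdiff : ∀ n, g (n + 2) - 2 * g (n + 1) + g n = -2 * A) :
    A = 1 / 2 ∨ A = 1 / 3 ∨ A = 3 / 10 ∧ d ≤ 12 / 25 := by
  have hlen := h.arcLength_le
  have hthird : A ≤ 1 + a / 4 - (d + a) → 4 * A + (1 + a / 4 - (d + a)) < 2 := by
    intro hA
    by_contra! hA'
    nlinarith [h.seven_tenths_mul_A_le, h.d_pos]
  obtain hA | hA | ⟨hA, hl⟩ := eq_half_or_third_or_three_tenths_of_memArc hg hdiff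
    (by linarith [h.le_d]) (by linarith [h.le_two_mul_A]) (by linarith [h.A_lt]) hthird
  · exact Or.inl hA
  · exact Or.inr (Or.inl hA)
  · exact Or.inr (Or.inr ⟨hA, by linarith⟩)

section Classification

variable {b x y : ℝ}

theorem exists_int_eq_of_binForm_sub (h : Admissible a A t lam d)
    (harc : ∀ i j : ℤ, MemArc (d + a) (1 + a / 4) (b - binForm A t lam (x + i) (y + j)))
    (i j : ℤ → ℤ) {δ : ℝ} (hδ : ∀ n, ∃ k : ℤ, binForm A t lam (x + i (n + 1)) (y + j (n + 1))
      - binForm A t lam (x + i n) (y + j n) = δ + k) : ∃ k : ℤ, δ = k := by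
  obtain ⟨k, hk⟩ := exists_int_eq_of_memArc_of_sub (δ := -δ) (fun n => harc (i n) (j n))
    (by linarith [h.arcLength_le, h.le_d]) fun n => by
      obtain ⟨k, hk⟩ := hδ n
      exact ⟨-k, by push_cast; linarith⟩
  exact ⟨-k, by push_cast; linarith⟩

theorem lam_eq_zero_of_A_eq_half (h : Admissible a (1 / 2) t lam d)
    (harc : ∀ i j : ℤ, MemArc (d + a) (1 + a / 4) (b - binForm (1 / 2) t lam (x + i) (y + j))) :
    lam = 0 ∧ ∃ k : ℤ, x = k + 1 / 2 := by
  have key (j : ℤ) : ∃ k : ℤ, x + lam * (y + j) + 1 / 2 = k :=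
    h.exists_int_eq_of_binForm_sub harc (fun n => n) (fun _ => j) fun n =>
      ⟨n, by simp only [binForm]; push_cast; ring⟩
  obtain ⟨k₀, hk₀⟩ := key 0
  obtain ⟨k₁, hk₁⟩ := key 1
  push_cast at hk₀ hk₁
  have hlam : lam = (k₁ - k₀ : ℤ) := by push_cast; linarith
  have h₀ : -1 < k₁ - k₀ := by rify; push_cast at hlam; linarith [h.lam_nonneg]
  have h₁ : k₁ - k₀ < 1 := by rify; push_cast at hlam; linarith [h.lam_le]
  have hlam₀ : lam = 0 := by rw [hlam, show k₁ - k₀ = 0 by lia, Int.cast_zero]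
  rw [hlam₀] at hk₀
  exact ⟨hlam₀, k₀ - 1, by push_cast; linarith⟩

theorem t_eq_half_of_A_eq_half (h : Admissible a (1 / 2) t 0 d)
    (harc : ∀ i j : ℤ, MemArc (d + a) (1 + a / 4) (b - binForm (1 / 2) t 0 (x + i) (y + j))) :
    t = 1 / 2 := by
  have ht₀ : 1 / 2 ≤ t := by linarith [h.A_le]
  have htd := h.two_thirds_mul_le
  have hd₀ : 63 / 100 ≤ d := by
    by_contra! hd
    have hsq : d ^ 2 ≤ (63 / 100) ^ 2 := by nlinarith [h.d_pos]
    nlinarith [sq_nonneg d]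
  have ht₁ : t < 1 := by
    have hsq : d ^ 2 ≤ (3 / 4) ^ 2 := by nlinarith [h.d_pos, h.d_le_three_fourths]
    nlinarith [sq_nonneg d]
  obtain ⟨k, hk⟩ := exists_int_eq_of_memArc_of_second_diff (δ := -2 * t) (fun j => harc 0 j)
    (by linarith [h.arcLength_le]) fun j => by simp only [binForm]; push_cast; ring
  have hk₀ : -2 < k := by rify; linarith
  have hk₁ : k ≤ -1 := by rify; linarith
  obtain rfl : k = -1 := by lia
  push_cast at hk
  linarith

theorem exists_int_eq_of_A_eq_half_of_t_eq_half (h : Admissible a (1 / 2) (1 / 2) 0 d)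
    (harc : ∀ i j : ℤ,
      MemArc (d + a) (1 + a / 4) (b - binForm (1 / 2) (1 / 2) 0 (x + i) (y + j))) :
    ∃ k : ℤ, y = k + 1 / 2 := by
  obtain ⟨k, hk⟩ := h.exists_int_eq_of_binForm_sub harc (fun _ => 0) (fun n => n)
    (δ := y + 1 / 2) fun n => ⟨n, by simp only [binForm]; push_cast; ring⟩
  exact ⟨k - 1, by push_cast; linarith⟩

theorem false_of_A_eq_three_tenths (h : Admissible a (3 / 10) t lam d) (hd : d ≤ 12 / 25)
    (harc : ∀ i j : ℤ, MemArc (d + a) (1 + a / 4) (b - binForm (3 / 10) t lam (x + i) (y + j))) :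
    False := by
  have key (j : ℤ) : ∃ k : ℤ, 3 * (x + lam * (y + j)) + 15 / 2 = k :=
    h.exists_int_eq_of_binForm_sub harc (fun n => 5 * n) (fun _ => j) fun n =>
      ⟨15 * n, by simp only [binForm]; push_cast; ring⟩
  obtain ⟨k₀, hk₀⟩ := key 0
  obtain ⟨k₁, hk₁⟩ := key 1
  push_cast at hk₀ hk₁
  have hk : k₁ - k₀ < 2 := by rify; linarith [h.lam_le]
  have hlam : lam ≤ 1 / 3 := by
    have : k₁ - k₀ ≤ 1 := by lia
    rify at this
    linarith
  have hlam_sq : lam ^ 2 ≤ 1 / 9 := by nlinarith [h.lam_nonneg]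
  have hd_sq : d ^ 2 ≤ (12 / 25) ^ 2 := by nlinarith [h.d_pos]
  nlinarith [h.A_le, h.two_thirds_mul_le, sq_nonneg d]

section Third

variable (h : Admissible a (1 / 3) t lam d)
  (harc : ∀ i j : ℤ, MemArc (d + a) (1 + a / 4) (b - binForm (1 / 3) t lam (x + i) (y + j)))

include h harc

theorem exists_int_two_mul_eq_of_A_eq_third (j : ℤ) :
    ∃ k : ℤ, 2 * (x + lam * (y + j)) = k :=
  h.exists_int_eq_of_binForm_sub harc (fun n => 3 * n) (fun _ => j) fun n =>
    ⟨6 * n + 3, by simp only [binForm]; push_cast; ring⟩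

theorem exists_int_two_mul_lam_eq_of_A_eq_third : ∃ k : ℤ, 2 * lam = k := by
  obtain ⟨k₀, hk₀⟩ := h.exists_int_two_mul_eq_of_A_eq_third harc 0
  obtain ⟨k₁, hk₁⟩ := h.exists_int_two_mul_eq_of_A_eq_third harc 1
  push_cast at hk₀ hk₁
  exact ⟨k₁ - k₀, by push_cast; linarith⟩

/-- On the line `w = y + 2 n` the squares `(v + lam w) ^ 2 / 3` attain two values that differ by
`1 / 3` modulo `1`, which shortens the arc by `1 / 3`. -/
theorem exists_memArc_of_A_eq_third :
    ∃ c : ℝ, ∀ n : ℤ, MemArc (d + a) (1 + a / 4 - 1 / 3) (c - t * (y + 2 * n) ^ 2) := by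
  have hlen : 1 + a / 4 - (d + a) < 1 - 1 / 3 := by linarith [h.arcLength_le, h.le_d]
  obtain ⟨q, hq⟩ := h.exists_int_two_mul_lam_eq_of_A_eq_third harc
  obtain ⟨k, hk⟩ := h.exists_int_two_mul_eq_of_A_eq_third harc 0
  push_cast at hk
  have hline (n i : ℤ) :
      MemArc (d + a) (1 + a / 4) (b - (k / 2 + i) ^ 2 / 3 - t * (y + 2 * n) ^ 2) := by
    have := harc (i - q * n) (2 * n)
    simp only [binForm] at this
    push_cast at this
    convert this using 1
    rw [← hq, ← hk]
    ring
  obtain ⟨r, rfl | rfl⟩ := k.even_or_odd'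
  · refine ⟨b - 1 / 3, fun n => MemArc.trim_right ?_ ?_ (by norm_num) hlen⟩
    · convert hline n (1 - r) using 1
      push_cast; ring
    · convert hline n (-r) using 1
      push_cast; ring
  · refine ⟨b - 1 / 12, fun n => MemArc.trim_right ?_ ?_ (by norm_num) hlen⟩
    · convert hline n (-r) using 1
      push_cast; ring
    · obtain ⟨N, hN⟩ := hline n (1 - r)
      refine ⟨N + 1, ?_⟩
      convert hN using 1
      push_cast; ring

theorem t_eq_quarter_of_A_eq_third : t = 1 / 4 ∧ lam = 1 / 2 := by
  obtain ⟨c, hc⟩ := h.exists_memArc_of_A_eq_third harc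
  have hd : d ≤ 8 / 15 := by
    obtain ⟨N, hlo, hhi⟩ := hc 0
    linarith [h.arcLength_le, hlo.trans hhi]
  have ht₀ : 1 / 4 ≤ t := by linarith [h.three_fourths_mul_A_le]
  have ht₁ : t < 3 / 8 := by
    have hd_sq : d ^ 2 ≤ (8 / 15) ^ 2 := by nlinarith [h.d_pos]
    nlinarith [h.two_thirds_mul_le, sq_nonneg d]
  obtain ⟨k, hk⟩ := exists_int_eq_of_memArc_of_second_diff (δ := -8 * t) hc
    (by linarith [h.arcLength_le, h.le_d]) fun n => by push_cast; ring
  have hk₀ : -3 < k := by rify; linarith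
  have hk₁ : k ≤ -2 := by rify; linarith
  obtain rfl : k = -2 := by lia
  push_cast at hk
  have ht : t = 1 / 4 := by linarith
  refine ⟨ht, le_antisymm h.lam_le ?_⟩
  nlinarith [h.A_le, h.lam_nonneg]

end Third

theorem exists_int_eq_of_A_eq_third_of_t_eq_quarter (h : Admissible a (1 / 3) (1 / 4) (1 / 2) d)
    (harc : ∀ i j : ℤ,
      MemArc (d + a) (1 + a / 4) (b - binForm (1 / 3) (1 / 4) (1 / 2) (x + i) (y + j))) :
    (∃ k : ℤ, x = k) ∧ ∃ k : ℤ, y = k := by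
  obtain ⟨k, hk⟩ := h.exists_int_two_mul_eq_of_A_eq_third harc 0
  obtain ⟨q, hq⟩ := h.exists_int_eq_of_binForm_sub harc (fun n => n) (fun n => n)
    (δ := x + y) fun n => ⟨2 * n + 1, by simp only [binForm]; push_cast; ring⟩
  push_cast at hk
  exact ⟨⟨k - q, by push_cast; linarith⟩, 2 * q - k, by push_cast; linarith⟩

theorem square_or_hexagonal (h : Admissible a A t lam d)
    (harc : ∀ i j : ℤ, MemArc (d + a) (1 + a / 4) (b - binForm A t lam (x + i) (y + j))) :
    (A = 1 / 2 ∧ t = 1 / 2 ∧ lam = 0 ∧ (∃ k : ℤ, x = k + 1 / 2) ∧ ∃ k : ℤ, y = k + 1 / 2) ∨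
      (A = 1 / 3 ∧ t = 1 / 4 ∧ lam = 1 / 2 ∧ (∃ k : ℤ, x = k) ∧ ∃ k : ℤ, y = k) := by
  obtain rfl | rfl | ⟨rfl, hd⟩ := h.A_eq (fun n => harc n 0) fun n => by
    simp only [binForm]; push_cast; ring
  · obtain ⟨rfl, hx⟩ := h.lam_eq_zero_of_A_eq_half harc
    obtain rfl := h.t_eq_half_of_A_eq_half harc
    exact Or.inl ⟨rfl, rfl, rfl, hx, h.exists_int_eq_of_A_eq_half_of_t_eq_half harc⟩
  · obtain ⟨rfl, rfl⟩ := h.t_eq_quarter_of_A_eq_third harc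
    exact Or.inr ⟨rfl, rfl, rfl, h.exists_int_eq_of_A_eq_third_of_t_eq_quarter harc⟩
  · exact (h.false_of_A_eq_three_tenths hd harc).elim

end Classification

end Admissible

/-- The four-variable problem left after fixing `x₂ = q`: with `(u, v, w)` the fractional shifts
and `B` the value of the linear part, no point of the grid has its value in the window `(0, d)`. -/
def SliceMissesWindow (a A t lam h₄ h₅ d : ℝ) (q : ℤ) (B u v w : ℝ) : Prop :=
  ∀ n i j k : ℤ, B + q * n - redPhi a A t lam h₄ h₅ (u + k) (v + i) (w + j) ∉ Ioo 0 d

theorem redPhi_eq_add_binForm (a A t lam h₄ h₅ u v w : ℝ) :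
    redPhi a A t lam h₄ h₅ u v w = a * (u + h₄ * v + h₅ * w) ^ 2 + binForm A t lam v w := by
  rw [redPhi, binForm, add_assoc]

namespace SliceMissesWindow

variable {a A t lam h₄ h₅ d : ℝ} {q : ℤ} {B u v w : ℝ}

theorem neg (h : SliceMissesWindow a A t lam h₄ h₅ d q B u v w) :
    SliceMissesWindow a A t lam h₄ h₅ d (-q) B u v w := fun n i j k => by
  simpa using h (-n) i j k

theorem of_add_int {i j : ℤ} (h : SliceMissesWindow a A t lam h₄ h₅ d q B u (v + i) (w + j)) :
    SliceMissesWindow a A t lam h₄ h₅ d q B u v w := fun n i' j' k => by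
  simpa using h n (i' - i) (j' - j) k

theorem missesWindow (h : SliceMissesWindow a A t lam h₄ h₅ d q B u v w) (n i j : ℤ) :
    MissesWindow a d (u + h₄ * (v + i) + h₅ * (w + j))
      (B + q * n - binForm A t lam (v + i) (w + j)) := fun k => by
  convert h n i j k using 2
  rw [redPhi_eq_add_binForm]
  ring

theorem missesWindow_add_int (h : SliceMissesWindow a A t lam h₄ h₅ d 1 B u v w) (i j k : ℤ) :
    MissesWindow a d (u + h₄ * (v + i) + h₅ * (w + j))
      (B - binForm A t lam (v + i) (w + j) + k) := by
  convert h.missesWindow k i j using 1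
  push_cast
  ring

theorem memArc (ha : 0 < a) (had : 2 * a < d)
    (h : SliceMissesWindow a A t lam h₄ h₅ d 1 B u v w) (i j : ℤ) :
    MemArc (d + a) (1 + a / 4) (B - binForm A t lam (v + i) (w + j)) := by
  have := MissesWindow.memArc ha (by linarith) 2 (by exact_mod_cast had)
    (h.missesWindow_add_int i j)
  convert this using 1
  push_cast
  ring

end SliceMissesWindow

theorem exists_redQ_eq {a A t : ℝ} (ha : a ≠ 0) (hA : A ≠ 0) (ht : t ≠ 0)
    (lam h₄ h₅ a₂ a₃ a₄ a₅ : ℝ) : ∃ κ z₃ z₄ z₅ : ℝ, ∀ x₁ x₂ x₃ x₄ x₅ : ℝ,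
      redQ a A t lam h₄ h₅ a₂ a₃ a₄ a₅ x₁ x₂ x₃ x₄ x₅ =
        (x₁ + κ * x₂) * x₂
          - redPhi a A t lam h₄ h₅ (x₃ - x₂ * z₃) (x₄ - x₂ * z₄) (x₅ - x₂ * z₅) := by
  let z₅ := (a₅ - a₃ * h₅ - lam * (a₄ - a₃ * h₄)) / (2 * t)
  let z₄ := (a₄ - a₃ * h₄) / (2 * A) - lam * z₅
  let z₃ := a₃ / (2 * a) - h₄ * z₄ - h₅ * z₅
  refine ⟨a₂ + redPhi a A t lam h₄ h₅ z₃ z₄ z₅, z₃, z₄, z₅, fun x₁ x₂ x₃ x₄ x₅ => ?_⟩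
  have h₃ : 2 * a * (z₃ + h₄ * z₄ + h₅ * z₅) = a₃ := by simp only [z₃]; field_simp; ring
  have h₄' : 2 * A * (z₄ + lam * z₅) = a₄ - a₃ * h₄ := by simp only [z₄]; field_simp; ring
  have h₅' : 2 * t * z₅ = a₅ - a₃ * h₅ - lam * (a₄ - a₃ * h₄) := by simp only [z₅]; field_simp
  simp only [redQ, redPhi]
  linear_combination (-x₂) * ((x₃ + h₄ * x₄ + h₅ * x₅) * h₃ + (x₄ + lam * x₅) * h₄' + x₅ * h₅')

namespace Admissible

theorem notMem_Ioo {a A t lam d s B : ℝ} (h : Admissible a A t lam d)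
    (hB : MissesWindow a d s B) : B ∉ Ioo (a / 4) (d + a) := by
  have := hB.notMem_Ioo h.a_pos h.d_pos 2 (by exact_mod_cast h.two_mul_a_lt)
  convert this using 3
  push_cast
  ring

section Square

variable {a d : ℝ}

theorem le_d_of_square (h : Admissible a (1 / 2) (1 / 2) 0 d) : 638 / 1000 ≤ d := by
  by_contra! hd
  have hsq : d ^ 2 ≤ (638 / 1000) ^ 2 := by nlinarith [h.d_pos]
  nlinarith [h.two_thirds_mul_le, sq_nonneg d]

section UnitSlice

variable {h₄ h₅ B u : ℝ}

theorem memArc_of_square (h : Admissible a (1 / 2) (1 / 2) 0 d)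
    (hB : SliceMissesWindow a (1 / 2) (1 / 2) 0 h₄ h₅ d 1 B u (1 / 2) (1 / 2)) :
    MemArc (d + a) (1 + a / 36) (B - 1 / 4) := by
  have := MissesWindow.memArc_of_one_lt h.a_pos h.two_mul_a_lt
    (by linarith [h.le_d_of_square, h.d_le]) (hB.missesWindow_add_int 0 0)
  convert this using 1
  simp only [binForm]
  push_cast
  ring

theorem memArc_offset_of_square (h : Admissible a (1 / 2) (1 / 2) 0 d)
    (hB : SliceMissesWindow a (1 / 2) (1 / 2) 0 h₄ h₅ d 1 B u (1 / 2) (1 / 2)) (i j : ℤ) :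
    MemArc (-(1 / 6)) (1 / 6) (u + h₄ * (1 / 2 + i) + h₅ * (1 / 2 + j)) := by
  obtain ⟨N, hlo, hhi⟩ := h.memArc_of_square hB
  obtain ⟨p, hp⟩ := Int.even_mul_succ_self i
  obtain ⟨q, hq⟩ := Int.even_mul_succ_self j
  have hmiss : MissesWindow a d (u + h₄ * (1 / 2 + i) + h₅ * (1 / 2 + j)) (B - 1 / 4 - N) := by
    convert hB.missesWindow_add_int i j (p + q - N) using 1
    rify at hp hq
    simp only [binForm]
    push_cast
    linarith
  have := hmiss.abs_sub_round_lt h.a_pos h.two_mul_a_lt hlo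
    (by linarith [h.le_d_of_square, h.d_le])
  exact ⟨_, abs_le.mp this.le⟩

theorem exists_int_eq_of_square (h : Admissible a (1 / 2) (1 / 2) 0 d)
    (hB : SliceMissesWindow a (1 / 2) (1 / 2) 0 h₄ h₅ d 1 B u (1 / 2) (1 / 2)) :
    (∃ k : ℤ, h₄ = k) ∧ ∃ k : ℤ, h₅ = k :=
  ⟨exists_int_eq_of_memArc_of_sub (fun n => h.memArc_offset_of_square hB n 0) (by norm_num)
      fun n => ⟨0, by push_cast; ring⟩,
    exists_int_eq_of_memArc_of_sub (fun n => h.memArc_offset_of_square hB 0 n) (by norm_num)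
      fun n => ⟨0, by push_cast; ring⟩⟩

end UnitSlice

section DoubleSlice

variable {s τ : ℝ} {M₀ : ℤ}

theorem false_of_square_odd_odd (h : Admissible a (1 / 2) (1 / 2) 0 d)
    (hlo : 4 * (d + a) - 4 ≤ τ) (hhi : τ ≤ a / 9)
    (hmiss : ∀ M W Z : ℤ, 2 ∣ M - M₀ → ¬2 ∣ W → ¬2 ∣ Z →
      MissesWindow a d s (τ + M - (W ^ 2 + Z ^ 2) / 8)) : False := by
  have hthree : MissesWindow a d s (τ + 3 / 4) := by
    rcases Int.emod_two_eq M₀ with hM | hM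
    · convert hmiss 2 3 1 (by lia) (by lia) (by lia) using 1
      push_cast; ring
    · convert hmiss 1 1 1 (by lia) (by lia) (by lia) using 1
      push_cast; ring
  exact h.notMem_Ioo hthree ⟨by linarith [h.le_d_of_square, h.d_le],
    by linarith [h.le_d_of_square, h.d_le]⟩

theorem false_of_square_odd_even (h : Admissible a (1 / 2) (1 / 2) 0 d)
    (hlo : 4 * (d + a) - 4 ≤ τ) (hhi : τ ≤ a / 9)
    (hmiss : ∀ M W Z : ℤ, 2 ∣ M - M₀ → ¬2 ∣ W → 2 ∣ Z →
      MissesWindow a d s (τ + M - (W ^ 2 + Z ^ 2) / 8)) : False := by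
  have hd := h.le_d_of_square
  have had := h.d_le
  have hseven : MissesWindow a d s (τ + 7 / 8) := by
    rcases Int.emod_two_eq M₀ with hM | hM
    · convert hmiss 2 3 0 (by lia) (by lia) (by lia) using 1
      push_cast; ring
    · convert hmiss 1 1 0 (by lia) (by lia) (by lia) using 1
      push_cast; ring
  have hthree : MissesWindow a d s (τ + 3 / 8) := by
    rcases Int.emod_two_eq M₀ with hM | hM
    · convert hmiss 2 3 2 (by lia) (by lia) (by lia) using 1
      push_cast; ring
    · convert hmiss 1 1 2 (by lia) (by lia) (by lia) using 1
      push_cast; ring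
  rcases lt_or_ge (τ + 7 / 8) (d + a) with hlt | hge
  · exact h.notMem_Ioo hseven ⟨by linarith, hlt⟩
  · exact h.notMem_Ioo hthree ⟨by linarith, by linarith⟩

theorem false_of_square_even_even (h : Admissible a (1 / 2) (1 / 2) 0 d)
    (hlo : 4 * (d + a) - 4 ≤ τ) (hhi : τ ≤ a / 9)
    (hmiss : ∀ M W Z : ℤ, 2 ∣ M - M₀ → 2 ∣ W → 2 ∣ Z →
      MissesWindow a d s (τ + M - (W ^ 2 + Z ^ 2) / 8)) : False := by
  have hd := h.le_d_of_square
  have had := h.d_le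
  rcases Int.emod_two_eq M₀ with hM | hM
  · have hone : MissesWindow a d s (τ + 1) := by
      convert hmiss 2 2 2 (by lia) (by lia) (by lia) using 1
      push_cast; ring
    have hthree : MissesWindow a d s (τ + 3 / 2) := by
      convert hmiss 2 2 0 (by lia) (by lia) (by lia) using 1
      push_cast; ring
    have := hone.le_sub h.a_pos hthree 3 (by push_cast; linarith) (by push_cast; linarith)
    linarith
  · have hone : MissesWindow a d s (τ + 1) := by
      convert hmiss 1 0 0 (by lia) (by lia) (by lia) using 1
      push_cast; ring
    have hhalf : MissesWindow a d s (τ + 1 / 2) := by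
      convert hmiss 1 2 0 (by lia) (by lia) (by lia) using 1
      push_cast; ring
    rcases lt_or_ge (τ + 1) (d + a) with hlt | hge
    · exact h.notMem_Ioo hone ⟨by linarith, hlt⟩
    · exact h.notMem_Ioo hhalf ⟨by linarith, by linarith⟩

theorem false_of_square_residues (h : Admissible a (1 / 2) (1 / 2) 0 d)
    (hlo : 4 * (d + a) - 4 ≤ τ) (hhi : τ ≤ a / 9) {W₀ Z₀ : ℤ}
    (hmiss : ∀ M W Z : ℤ, 2 ∣ M - M₀ → 2 ∣ W - W₀ → 2 ∣ Z - Z₀ →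
      MissesWindow a d s (τ + M - (W ^ 2 + Z ^ 2) / 8)) : False := by
  by_cases hW : 2 ∣ W₀ <;> by_cases hZ : 2 ∣ Z₀
  · exact h.false_of_square_even_even hlo hhi fun M W Z hM hW' hZ' =>
      hmiss M W Z hM (by lia) (by lia)
  · refine h.false_of_square_odd_even hlo hhi (M₀ := M₀) (s := s) fun M W Z hM hW' hZ' => ?_
    rw [add_comm ((W : ℝ) ^ 2)]
    exact hmiss M Z W hM (by lia) (by lia)
  · exact h.false_of_square_odd_even hlo hhi fun M W Z hM hW' hZ' =>
      hmiss M W Z hM (by lia) (by lia)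
  · exact h.false_of_square_odd_odd hlo hhi fun M W Z hM hW' hZ' =>
      hmiss M W Z hM (by lia) (by lia)

end DoubleSlice

theorem false_of_square (h : Admissible a (1 / 2) (1 / 2) 0 d)
    {h₄ h₅ B B' u u' u₂ : ℝ} {i i' j j' : ℤ}
    (hB : SliceMissesWindow a (1 / 2) (1 / 2) 0 h₄ h₅ d 1 B u (i + 1 / 2) (j + 1 / 2))
    (hB' : SliceMissesWindow a (1 / 2) (1 / 2) 0 h₄ h₅ d 1 B' u' (i' + 1 / 2) (j' + 1 / 2))
    (hB₂ : SliceMissesWindow a (1 / 2) (1 / 2) 0 h₄ h₅ d 2 (3 * B + B') u₂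
      ((3 * (i + 1 / 2) - (i' + 1 / 2)) / 2) ((3 * (j + 1 / 2) - (j' + 1 / 2)) / 2)) : False := by
  rw [add_comm (i : ℝ), add_comm (j : ℝ)] at hB
  rw [add_comm (i' : ℝ), add_comm (j' : ℝ)] at hB'
  obtain ⟨⟨p, rfl⟩, q, rfl⟩ := h.exists_int_eq_of_square hB.of_add_int
  obtain ⟨N, hlo, hhi⟩ := h.memArc_of_square hB.of_add_int
  obtain ⟨N', hlo', hhi'⟩ := h.memArc_of_square hB'.of_add_int
  refine h.false_of_square_residues (τ := 3 * (B - 1 / 4 - N) + (B' - 1 / 4 - N') - 4)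
    (s := u₂ + p * ((3 * i - i' + 1) / 2) + q * ((3 * j - j' + 1) / 2))
    (M₀ := 5 + 3 * N + N') (W₀ := 3 * i - i' + 1) (Z₀ := 3 * j - j' + 1)
    (by linarith) (by linarith) fun M W Z ⟨n, hn⟩ ⟨k, hk⟩ ⟨l, hl⟩ => ?_
  rw [← MissesWindow.add_int_iff (p * k + q * l)]
  convert hB₂.missesWindow n k l using 1
  · push_cast
    ring
  · obtain rfl : M = 2 * n + (5 + 3 * N + N') := by lia
    obtain rfl : W = 2 * k + (3 * i - i' + 1) := by lia
    obtain rfl : Z = 2 * l + (3 * j - j' + 1) := by lia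
    simp only [binForm]
    push_cast
    ring

end Square

section Hexagonal

variable {a d : ℝ}

theorem le_d_of_hexagonal (h : Admissible a (1 / 3) (1 / 4) (1 / 2) d) : 485 / 1000 ≤ d := by
  by_contra! hd
  have hsq : d ^ 2 ≤ (485 / 1000) ^ 2 := by nlinarith [h.d_pos]
  nlinarith [h.two_thirds_mul_le, sq_nonneg d]

section UnitSlice

variable {h₄ h₅ B u : ℝ}

theorem memArc_of_hexagonal (h : Admissible a (1 / 3) (1 / 4) (1 / 2) d)
    (hB : SliceMissesWindow a (1 / 3) (1 / 4) (1 / 2) h₄ h₅ d 1 B u 0 0) :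
    MemArc (d + a) (2 / 3 + a / 4) (B - 1 / 3) := by
  have hzero : MemArc (d + a) (1 + a / 4) (B - 1 / 3 + 1 / 3) := by
    convert hB.memArc h.a_pos h.two_mul_a_lt 0 0 using 1
    simp only [binForm]
    push_cast
    ring
  have hone : MemArc (d + a) (1 + a / 4) (B - 1 / 3) := by
    convert hB.memArc h.a_pos h.two_mul_a_lt 1 0 using 1
    simp only [binForm]
    push_cast
    ring
  convert hone.trim_right hzero (by norm_num) (by linarith [h.arcLength_le, h.le_d]) using 1
  ring

theorem abs_offset_sub_round_lt_of_hexagonal (h : Admissible a (1 / 3) (1 / 4) (1 / 2) d)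
    (hB : SliceMissesWindow a (1 / 3) (1 / 4) (1 / 2) h₄ h₅ d 1 B u 0 0) {i j : ℤ}
    (hij : ¬3 ∣ i - j) :
    |u + h₄ * (0 + i) + h₅ * (0 + j) - round (u + h₄ * (0 + i) + h₅ * (0 + j))| < 1 / 6 := by
  obtain ⟨N, hlo, hhi⟩ := h.memArc_of_hexagonal hB
  obtain ⟨p, hp⟩ : ∃ p : ℤ, i ^ 2 + i * j + j ^ 2 = 3 * p + 1 := by
    obtain ⟨r, hr | hr⟩ : ∃ r : ℤ, i = j + 3 * r + 1 ∨ i = j + 3 * r - 1 :=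
      ⟨(i - j + 1) / 3, by lia⟩
    · exact ⟨3 * r ^ 2 + 2 * r + i * j, by rw [hr]; ring⟩
    · exact ⟨3 * r ^ 2 - 2 * r + i * j, by rw [hr]; ring⟩
  have hmiss : MissesWindow a d (u + h₄ * (0 + i) + h₅ * (0 + j)) (B - 1 / 3 - N) := by
    convert hB.missesWindow_add_int i j (p - N) using 1
    rify at hp
    simp only [binForm]
    push_cast
    linarith
  exact hmiss.abs_sub_round_lt h.a_pos h.two_mul_a_lt hlo
    (by linarith [h.le_d_of_hexagonal, h.d_le])

theorem exists_int_eq_of_hexagonal (h : Admissible a (1 / 3) (1 / 4) (1 / 2) d)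
    (hB : SliceMissesWindow a (1 / 3) (1 / 4) (1 / 2) h₄ h₅ d 1 B u 0 0) :
    (∃ k : ℤ, h₄ = k) ∧ ∃ k : ℤ, h₅ = k := by
  have hoff {i j : ℤ} (hij : ¬3 ∣ i - j) :
      MemArc (-(1 / 6)) (1 / 6) (u + h₄ * (0 + i) + h₅ * (0 + j)) :=
    ⟨_, abs_le.mp (h.abs_offset_sub_round_lt_of_hexagonal hB hij).le⟩
  obtain ⟨p, hp⟩ := exists_int_eq_of_memArc_of_sub (δ := 3 * h₄)
    (fun n => hoff (i := 1 + 3 * n) (j := 0) (by lia)) (by norm_num)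
    fun n => ⟨0, by push_cast; ring⟩
  obtain ⟨q, hq⟩ := exists_int_eq_of_memArc_of_sub (δ := h₄ + h₅)
    (fun n => hoff (i := n + 1) (j := n) (by lia)) (by norm_num)
    fun n => ⟨0, by push_cast; ring⟩
  obtain ⟨k, hk⟩ : ∃ k : ℤ, |h₄ - k| < 1 / 3 := by
    have h₁ := abs_lt.mp (h.abs_offset_sub_round_lt_of_hexagonal hB (i := 1) (j := 0) (by lia))
    have h₂ := abs_lt.mp (h.abs_offset_sub_round_lt_of_hexagonal hB (i := 2) (j := 0) (by lia))
    refine ⟨round (u + h₄ * (0 + (2 : ℤ)) + h₅ * (0 + (0 : ℤ)))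
      - round (u + h₄ * (0 + (1 : ℤ)) + h₅ * (0 + (0 : ℤ))), abs_lt.mpr ?_⟩
    push_cast at h₁ h₂ ⊢
    constructor <;> linarith
  obtain ⟨hk₁, hk₂⟩ := abs_lt.mp hk
  have hp₁ : p < 3 * k + 1 := by rify; linarith
  have hp₂ : 3 * k < p + 1 := by rify; linarith
  obtain rfl : p = 3 * k := by lia
  push_cast at hp
  exact ⟨⟨k, by linarith⟩, q - k, by push_cast; linarith⟩

end UnitSlice

section DoubleSlice

variable {s τ : ℝ} {M₀ W₀ Z₀ : ℤ}

theorem false_of_hexagonal_not_even (h : Admissible a (1 / 3) (1 / 4) (1 / 2) d)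
    (hlo : 4 * (d + a) - 8 / 3 ≤ τ) (hhi : τ ≤ a)
    (hmiss : ∀ M W Z : ℤ, 2 ∣ M - M₀ → 2 ∣ W - W₀ → 2 ∣ Z - Z₀ →
      MissesWindow a d s (τ + M - (W ^ 2 + W * Z + Z ^ 2) / 12)) (hWZ : ¬(2 ∣ W₀ ∧ 2 ∣ Z₀)) :
    False := by
  obtain ⟨M, W, Z, hM, hW, hZ, hval⟩ : ∃ M W Z : ℤ, 2 ∣ M - M₀ ∧ 2 ∣ W - W₀ ∧ 2 ∣ Z - Z₀ ∧
      12 * M - (W ^ 2 + W * Z + Z ^ 2) = 3 := by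
    rcases Int.emod_two_eq M₀ with hM | hM <;> rcases Int.emod_two_eq W₀ with hW | hW <;>
      rcases Int.emod_two_eq Z₀ with hZ | hZ
    · exact (hWZ (by lia)).elim
    · exact ⟨2, 4, 1, by lia, by lia, by lia, by norm_num⟩
    · exact ⟨2, 1, 4, by lia, by lia, by lia, by norm_num⟩
    · exact ⟨2, 5, -1, by lia, by lia, by lia, by norm_num⟩
    · exact (hWZ (by lia)).elim
    · exact ⟨1, 0, 3, by lia, by lia, by lia, by norm_num⟩
    · exact ⟨1, 3, 0, by lia, by lia, by lia, by norm_num⟩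
    · exact ⟨1, 3, -3, by lia, by lia, by lia, by norm_num⟩
  have hquarter : MissesWindow a d s (τ + 1 / 4) := by
    convert hmiss M W Z hM hW hZ using 1
    rify at hval
    linarith
  have hd := h.le_d_of_hexagonal
  have had := h.d_le
  exact h.notMem_Ioo hquarter ⟨by linarith, by linarith⟩

theorem false_of_hexagonal_even (h : Admissible a (1 / 3) (1 / 4) (1 / 2) d)
    (hlo : 4 * (d + a) - 8 / 3 ≤ τ) (hhi : τ ≤ a)
    (hmiss : ∀ M W Z : ℤ, 2 ∣ M - M₀ → 2 ∣ W → 2 ∣ Z →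
      MissesWindow a d s (τ + M - (W ^ 2 + W * Z + Z ^ 2) / 12)) : False := by
  have hone : MissesWindow a d s (τ + 1) := by
    rcases Int.emod_two_eq M₀ with hM | hM
    · convert hmiss 2 2 2 (by lia) (by lia) (by lia) using 1
      push_cast; ring
    · convert hmiss 1 0 0 (by lia) (by lia) (by lia) using 1
      push_cast; ring
  have htwo : MissesWindow a d s (τ + 2 / 3) := by
    rcases Int.emod_two_eq M₀ with hM | hM
    · convert hmiss 2 4 0 (by lia) (by lia) (by lia) using 1
      push_cast; ring
    · convert hmiss 1 2 0 (by lia) (by lia) (by lia) using 1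
      push_cast; ring
  have hd := h.le_d_of_hexagonal
  have had := h.d_le
  have := htwo.le_sub h.a_pos hone 3 (by push_cast; linarith) (by push_cast; linarith)
  linarith

theorem false_of_hexagonal_residues (h : Admissible a (1 / 3) (1 / 4) (1 / 2) d)
    (hlo : 4 * (d + a) - 8 / 3 ≤ τ) (hhi : τ ≤ a)
    (hmiss : ∀ M W Z : ℤ, 2 ∣ M - M₀ → 2 ∣ W - W₀ → 2 ∣ Z - Z₀ →
      MissesWindow a d s (τ + M - (W ^ 2 + W * Z + Z ^ 2) / 12)) : False := by
  by_cases hWZ : 2 ∣ W₀ ∧ 2 ∣ Z₀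
  · exact h.false_of_hexagonal_even hlo hhi fun M W Z hM hW hZ =>
      hmiss M W Z hM (dvd_sub hW hWZ.1) (dvd_sub hZ hWZ.2)
  · exact h.false_of_hexagonal_not_even hlo hhi hmiss hWZ

end DoubleSlice

theorem false_of_hexagonal (h : Admissible a (1 / 3) (1 / 4) (1 / 2) d)
    {h₄ h₅ B B' u u' u₂ : ℝ} {i i' j j' : ℤ}
    (hB : SliceMissesWindow a (1 / 3) (1 / 4) (1 / 2) h₄ h₅ d 1 B u i j)
    (hB' : SliceMissesWindow a (1 / 3) (1 / 4) (1 / 2) h₄ h₅ d 1 B' u' i' j')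
    (hB₂ : SliceMissesWindow a (1 / 3) (1 / 4) (1 / 2) h₄ h₅ d 2 (3 * B + B') u₂
      ((3 * i - i') / 2) ((3 * j - j') / 2)) : False := by
  rw [← zero_add (i : ℝ), ← zero_add (j : ℝ)] at hB
  rw [← zero_add (i' : ℝ), ← zero_add (j' : ℝ)] at hB'
  obtain ⟨⟨p, rfl⟩, q, rfl⟩ := h.exists_int_eq_of_hexagonal hB.of_add_int
  obtain ⟨N, hlo, hhi⟩ := h.memArc_of_hexagonal hB.of_add_int
  obtain ⟨N', hlo', hhi'⟩ := h.memArc_of_hexagonal hB'.of_add_int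
  refine h.false_of_hexagonal_residues (τ := 3 * (B - 1 / 3 - N) + (B' - 1 / 3 - N') - 8 / 3)
    (s := u₂ + p * ((3 * i - i') / 2) + q * ((3 * j - j') / 2))
    (M₀ := 4 + 3 * N + N') (W₀ := 3 * i - i') (Z₀ := 3 * j - j')
    (by linarith) (by linarith) fun M W Z ⟨n, hn⟩ ⟨k, hk⟩ ⟨l, hl⟩ => ?_
  rw [← MissesWindow.add_int_iff (p * k + q * l)]
  convert hB₂.missesWindow n k l using 1
  · push_cast
    ring
  · obtain rfl : M = 2 * n + (4 + 3 * N + N') := by lia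
    obtain rfl : W = 2 * k + (3 * i - i') := by lia
    obtain rfl : Z = 2 * l + (3 * j - j') := by lia
    simp only [binForm]
    push_cast
    ring

end Hexagonal

theorem false_of_slices {a A t lam h₄ h₅ d B B' u u' u₂ v v' w w' : ℝ}
    (h : Admissible a A t lam d)
    (hB : SliceMissesWindow a A t lam h₄ h₅ d 1 B u v w)
    (hB' : SliceMissesWindow a A t lam h₄ h₅ d 1 B' u' v' w')
    (hB₂ : SliceMissesWindow a A t lam h₄ h₅ d 2 (3 * B + B') u₂
      ((3 * v - v') / 2) ((3 * w - w') / 2)) : False := by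
  have hclass := h.square_or_hexagonal (hB.memArc h.a_pos h.two_mul_a_lt)
  obtain ⟨rfl, rfl, rfl, ⟨i, rfl⟩, j, rfl⟩ | ⟨rfl, rfl, rfl, ⟨i, rfl⟩, j, rfl⟩ := hclass
  · obtain ⟨-, -, -, ⟨i', rfl⟩, j', rfl⟩ | ⟨hA, -⟩ :=
      h.square_or_hexagonal (hB'.memArc h.a_pos h.two_mul_a_lt)
    · exact h.false_of_square hB hB' hB₂
    · norm_num at hA
  · obtain ⟨hA, -⟩ | ⟨-, -, -, ⟨i', rfl⟩, j', rfl⟩ :=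
      h.square_or_hexagonal (hB'.memArc h.a_pos h.two_mul_a_lt)
    · norm_num at hA
    · exact h.false_of_hexagonal hB hB' hB₂

theorem exists_redQ_mem_Ioo {a A t lam d : ℝ} (h : Admissible a A t lam d) (h₄ h₅ a₂ a₃ a₄ a₅ : ℝ)
    (c₁ c₃ c₄ c₅ : ℝ) : ∃ e n k i j : ℤ,
      redQ a A t lam h₄ h₅ a₂ a₃ a₄ a₅ (c₁ + n) e (c₃ + k) (c₄ + i) (c₅ + j) ∈ Ioo 0 d := by
  by_contra! hmiss
  obtain ⟨κ, z₃, z₄, z₅, hQ⟩ :=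
    exists_redQ_eq h.a_pos.ne' h.A_pos.ne' h.t_pos.ne' lam h₄ h₅ a₂ a₃ a₄ a₅
  have hslice (e : ℤ) : SliceMissesWindow a A t lam h₄ h₅ d e (e * c₁ + κ * e ^ 2)
      (c₃ - e * z₃) (c₄ - e * z₄) (c₅ - e * z₅) := fun n i j k => by
    convert hmiss e n k i j using 2
    rw [hQ]
    ring_nf
  have hneg := (hslice (-1)).neg
  rw [neg_neg] at hneg
  refine h.false_of_slices (hslice 1) hneg (u₂ := c₃ - (2 : ℤ) * z₃) ?_
  convert hslice 2 using 1 <;> push_cast <;> ring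

end Admissible

theorem thm6_general (a A t lam h₄ h₅ a₂ a₃ a₄ a₅ d : ℝ) (ha : 0 < a) (hA : 0 < A)
    (hlam : 0 ≤ lam ∧ lam ≤ 1 / 2) (hAC : A ≤ t + A * lam ^ 2)
    (hd : d = (2 * a * A * t) ^ ((1 : ℝ) / 5)) (hm : 2 < d / a ∧ d / a ≤ 3)
    (hK : 1 < (d + 3 * a / 4) / A ∧ (d + 3 * a / 4) / A ≤ 2) (had : a + d ≤ 1)
    (c₁ c₂ c₃ c₄ c₅ : ℝ) (hc₂ : ∃ n : ℤ, (n : ℝ) = c₂) :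
    ∃ x₁ x₂ x₃ x₄ x₅ : ℝ,
      (∃ k : ℤ, x₁ - c₁ = k) ∧ (∃ k : ℤ, x₂ - c₂ = k) ∧ (∃ k : ℤ, x₃ - c₃ = k) ∧
      (∃ k : ℤ, x₄ - c₄ = k) ∧ (∃ k : ℤ, x₅ - c₅ = k) ∧
      0 < redQ a A t lam h₄ h₅ a₂ a₃ a₄ a₅ x₁ x₂ x₃ x₄ x₅ ∧
      redQ a A t lam h₄ h₅ a₂ a₃ a₄ a₅ x₁ x₂ x₃ x₄ x₅ < d := by
  rw [lt_div_iff₀ ha, div_le_iff₀ ha] at hm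
  rw [lt_div_iff₀ hA, div_le_iff₀ hA] at hK
  have hlam_sq : lam ^ 2 ≤ 1 / 4 := by nlinarith [hlam.1, hlam.2]
  have ht : 0 < t := by nlinarith
  have hadm : Admissible a A t lam d :=
    { a_pos := ha
      A_pos := hA
      lam_nonneg := hlam.1
      lam_le := hlam.2
      A_le := hAC
      d_pow := by
        rw [hd, ← Real.rpow_mul_natCast (by positivity)]
        norm_num
      two_mul_a_lt := hm.1
      d_le := hm.2
      A_lt := by linarith [hK.1]
      le_two_mul_A := hK.2
      a_add_d_le := had }
  obtain ⟨c, rfl⟩ := hc₂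
  obtain ⟨e, n, k, i, j, hQ⟩ := hadm.exists_redQ_mem_Ioo h₄ h₅ a₂ a₃ a₄ a₅ c₁ c₃ c₄ c₅
  exact ⟨c₁ + n, e, c₃ + k, c₄ + i, c₅ + j, ⟨n, by ring⟩, ⟨e - c, by push_cast; ring⟩,
    ⟨k, by ring⟩, ⟨i, by ring⟩, ⟨j, by ring⟩, hQ.1, hQ.2⟩

theorem thm6 (a A t lam h₄ h₅ a₂ a₃ a₄ a₅ d a₄' a₅' : ℝ) (m K : ℤ)
    (ha : 0 < a) (hA : 0 < A) (ht : 0 < t)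
    (ha₂ : -1/2 < a₂ ∧ a₂ ≤ 1/2) (ha₃ : -1/2 < a₃ ∧ a₃ ≤ 1/2)
    (ha₄ : -1/2 < a₄ ∧ a₄ ≤ 1/2) (ha₅ : -1/2 < a₅ ∧ a₅ ≤ 1/2)
    (hh₄ : -1/2 < h₄ ∧ h₄ ≤ 1/2) (hh₅ : -1/2 < h₅ ∧ h₅ ≤ 1/2)
    (hlam : 0 ≤ lam ∧ lam ≤ 1/2) (hAC : A ≤ t + A * lam^2)
    (hmin_le : ∀ u v w : ℤ, ¬(u = 0 ∧ v = 0 ∧ w = 0) →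
      a ≤ redPhi a A t lam h₄ h₅ (u : ℝ) (v : ℝ) (w : ℝ))
    (hmin_eq : ∃ u v w : ℤ, ¬(u = 0 ∧ v = 0 ∧ w = 0) ∧
      redPhi a A t lam h₄ h₅ (u : ℝ) (v : ℝ) (w : ℝ) = a)
    (hd : d = (2 * a * A * t) ^ ((1 : ℝ)/5))
    (hm : (m : ℝ) < d / a ∧ d / a ≤ (m : ℝ) + 1)
    (hK : (K : ℝ) < (d + ((m : ℝ)^2 - 1) * a / 4) / A ∧
          (d + ((m : ℝ)^2 - 1) * a / 4) / A ≤ (K : ℝ) + 1)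
    (ha' : a < 1/2) (hd1 : d ≤ 1) (had : a + d ≤ 1)
    (hmK : m = 2 ∧ K = 1)
    (ha₄' : -1/2 < a₄' ∧ a₄' ≤ 1/2 ∧ ∃ n : ℤ, a₄' - (a₄ - a₃ * h₄) = (n : ℝ))
    (ha₅' : -1/2 < a₅' ∧ a₅' ≤ 1/2 ∧ ∃ n : ℤ, a₅' - (a₅ - a₃ * h₅) = (n : ℝ))
    (c₁ c₂ c₃ c₄ c₅ : ℝ) (hc₂ : ∃ n : ℤ, (n : ℝ) = c₂)
    (hexc : ¬ (A = 1/3 ∧ t = 1/4 ∧ lam = 1/2 ∧ (∃ n : ℤ, (n : ℝ) = c₅) ∧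
      (∃ n : ℤ, a₅' - a₄'/2 = (n : ℝ)) ∧ d + 6 * d^5 < 2/3)) :
    ∃ x₁ x₂ x₃ x₄ x₅ : ℝ,
      (∃ k : ℤ, x₁ - c₁ = k) ∧ (∃ k : ℤ, x₂ - c₂ = k) ∧ (∃ k : ℤ, x₃ - c₃ = k) ∧
      (∃ k : ℤ, x₄ - c₄ = k) ∧ (∃ k : ℤ, x₅ - c₅ = k) ∧
      0 < redQ a A t lam h₄ h₅ a₂ a₃ a₄ a₅ x₁ x₂ x₃ x₄ x₅ ∧
      redQ a A t lam h₄ h₅ a₂ a₃ a₄ a₅ x₁ x₂ x₃ x₄ x₅ < d := by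
  obtain ⟨rfl, rfl⟩ := hmK
  norm_num at hm hK
  exact thm6_general a A t lam h₄ h₅ a₂ a₃ a₄ a₅ d ha hA hlam hAC hd hm hK had c₁ c₂ c₃ c₄ c₅ hc₂
end

section
/- Theorem 5: With the reduced form Q and parameters as in the context but with d = ((32/3)·|D|)^{1/5} (so d⁵ = (8/3)aAt), and with m, K defined from this d, suppose the reals c_1, …, c_5 satisfy c_2 ∈ ℤ, and suppose a < 1/2, d ≤ 1, a + d ≤ 1, and (m, K) = (2,2). Then there exist x_1, …, x_5 with x_i − c_i ∈ ℤ for every i such that 0 < Q(x_1,…,x_5) < d. -/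
/-!
Completing the squares in `x₃` and `x₄` turns `Q(x₁, n, x₃, x₄, x₅)` into
`P - a * (X + m) ^ 2 - A * (y + i) ^ 2`, where `P = n * x₁ + n ^ 2 * α + n * β * x₅ - t * x₅ ^ 2`
and `m`, `i` run over the integers. For `(m, K) = (2, 2)` the translates of `(0, d)` by the numbers
`a * (X + m) ^ 2 + A * (y + i) ^ 2` cover the window `((a + A) / 4, d + a + A)`, so if `Q` never
takes a value in `(0, d)` then `P` misses the window.

For `n = 1`, as `x₁` varies, `P` is determined modulo one by a quadratic sequence in `x₅`. Its
increments over `q` steps form an arithmetic progression with difference `-2 * t * q`, so a window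
longer than `1 / 2` is hit when `2 * t * q` is close to an integer without being one. Together with
`d ^ 5 = 8 / 3 * a * A * t` this leaves only `2 * t * q = 1` with `q = 1, 2, 3`. In these cases
there are classes `±r` for `x₅` at which the values `v` of `P` for `n = 1` and `v'` for `n = -1` lie
just below the window, and then `(2 * l + 1) * ((l + 1) * v + l * v')`, a value of `P` for
`n = 2 * l + 1`, has to miss the window too. The bounds on the parameters rule this out.
-/

open Set

/-! ### Quadratic sequences modulo one -/

section ModOne

lemma exists_abs_add_intCast_le_half (x : ℝ) : ∃ k : ℤ, |x + k| ≤ 1 / 2 :=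
  ⟨-round x, by simpa [← sub_eq_add_neg] using abs_sub_round x⟩

lemma exists_sq_add_intCast_eq_sq_abs_add (x : ℝ) (m : ℤ) :
    ∃ k : ℤ, (x + k) ^ 2 = (|x| + m) ^ 2 := by
  rcases abs_choice x with hx | hx
  · exact ⟨m, by rw [hx]⟩
  · exact ⟨-m, by rw [hx]; push_cast; ring⟩

lemma exists_add_intCast_mul_mem_Ioo {θ l u : ℝ} (hθ : θ ≠ 0) (hlen : |θ| < u - l) (x : ℝ) :
    ∃ k : ℤ, x + k * θ ∈ Ioo l u := by
  obtain ⟨k, ⟨hl, hu⟩, -⟩ := existsUnique_add_zsmul_mem_Ioc (abs_pos.mpr hθ) x l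
  rw [zsmul_eq_mul] at hl hu
  rcases abs_choice θ with h | h
  · exact ⟨k, by rw [← h]; exact ⟨hl, by linarith⟩⟩
  · refine ⟨-k, ?_⟩
    rw [show x + ((-k : ℤ) : ℝ) * θ = x + k * |θ| by rw [h]; push_cast; ring]
    exact ⟨hl, by linarith⟩

lemma exists_add_intCast_mem_Icc {x l u : ℝ} (hx : ∀ k : ℤ, x + k ∉ Ioo l u) :
    ∃ k : ℤ, x + k ∈ Icc (u - 1) l := by
  have hfloor := Int.floor_le (l - x)
  have hlt := Int.lt_floor_add_one (l - x)
  refine ⟨⌊l - x⌋, ?_, by linarith⟩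
  by_contra hu
  refine hx (⌊l - x⌋ + 1) ?_
  push_cast
  constructor <;> linarith

lemma abs_lt_of_near_half {y₀ y₁ s ε : ℝ} (z : ℤ) (hy : y₁ = y₀ + s + z) (hs : |s| ≤ 1 / 2)
    (hε : ε ≤ 1 / 4) (h₀ : |y₀| ≤ 1 / 2) (h₀' : 1 / 2 - ε < |y₀|)
    (h₁ : |y₁| ≤ 1 / 2) (h₁' : 1 / 2 - ε < |y₁|) : |s| < 2 * ε := by
  obtain ⟨w, hw⟩ : ∃ w : ℤ, |s - w| < 2 * ε := by
    rcases abs_choice y₀ with e₀ | e₀ <;> rcases abs_choice y₁ with e₁ | e₁ <;>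
      rw [e₀] at h₀ h₀' <;> rw [e₁] at h₁ h₁'
    · exact ⟨-z, by push_cast; rw [abs_lt]; constructor <;> linarith⟩
    · exact ⟨-z - 1, by push_cast; rw [abs_lt]; constructor <;> linarith⟩
    · exact ⟨-z + 1, by push_cast; rw [abs_lt]; constructor <;> linarith⟩
    · exact ⟨-z, by push_cast; rw [abs_lt]; constructor <;> linarith⟩
  have hw0 : w = 0 := by
    rw [← Int.abs_lt_one_iff]
    have : |(w : ℝ)| < 1 := by
      rw [abs_lt] at hw ⊢
      rw [abs_le] at hs
      constructor <;> linarith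
    exact_mod_cast this
  simpa [hw0] using hw

end ModOne

/-- The sequence `C + b * k - t * k ^ 2`, for `k : ℤ`, never meets the open interval `(l, u)`
modulo one. -/
def QuadAvoids (C b t l u : ℝ) : Prop :=
  ∀ k i : ℤ, C + b * k - t * k ^ 2 + i ∉ Ioo l u

namespace QuadAvoids

variable {C b t l u : ℝ}

lemma exists_mem_Icc (h : QuadAvoids C b t l u) (k : ℤ) :
    ∃ i : ℤ, C + b * k - t * k ^ 2 + i ∈ Icc (u - 1) l :=
  exists_add_intCast_mem_Icc (h k)

lemma sub_le_one (h : QuadAvoids C b t l u) : u - l ≤ 1 := by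
  obtain ⟨i, hi⟩ := h.exists_mem_Icc 0
  linarith [hi.1, hi.2]

/-- The increments over `q` steps form, modulo one, an arithmetic progression with difference
`p - 2 * t * q`. If this is small and nonzero, some increment carries the gap across `(l, u)`. -/
lemma two_mul_mul_eq (h : QuadAvoids C b t l u) {q p : ℤ}
    (hqp : |2 * t * q - p| < 2 * (u - l) - 1) : 2 * t * q = p := by
  by_contra hne
  obtain ⟨k, hk⟩ := exists_add_intCast_mul_mem_Ioo (θ := p - 2 * t * q) (l := 1 - (u - l))
    (u := u - l) (by rwa [ne_eq, sub_eq_zero, eq_comm]) (by rw [abs_sub_comm]; linarith)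
    (b * q - t * q ^ 2)
  obtain ⟨i, hi⟩ := h.exists_mem_Icc k
  refine h (k + q) (i + p * k) ?_
  have hstep : C + b * ((k + q : ℤ) : ℝ) - t * ((k + q : ℤ) : ℝ) ^ 2 + ((i + p * k : ℤ) : ℝ)
      = (C + b * k - t * k ^ 2 + i) + (b * q - t * q ^ 2 + k * (p - 2 * t * q)) := by
    push_cast; ring
  rw [hstep]
  constructor <;> linarith [hi.1, hi.2, hk.1, hk.2]

/-- Along the multiples of `q` the sequence is, modulo one, an arithmetic progression with
difference `b * q - q / 2`. -/
lemma exists_intCast_eq (h : QuadAvoids C b t l u) (hlen : 1 / 2 < u - l) {q : ℤ}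
    (hq : 2 * t * q = 1) : ∃ z : ℤ, b * q - q / 2 = z := by
  by_contra! hz
  set κ := b * q - (q : ℝ) / 2 with hκ
  obtain ⟨i, hi⟩ := exists_add_intCast_mul_mem_Ioo (sub_ne_zero.mpr (hz (round κ)))
    ((abs_sub_round κ).trans_lt hlen) C
  obtain ⟨w, hw⟩ := (Int.even_mul_pred_self i).two_dvd
  have hw' : (i : ℝ) * (i - 1) = 2 * w := by exact_mod_cast hw
  refine h (q * i) (q * w - i * round κ) ?_
  convert hi using 1
  push_cast
  linear_combination (-(q : ℝ) / 2) * hw' - (q * i ^ 2 / 2 : ℝ) * hq + (i : ℝ) * hκ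

lemma exists_centered (h : QuadAvoids C b t l u) (ht : t ≠ 0) :
    ∃ C' s : ℝ, 0 ≤ s ∧ s ≤ 1 / 2 ∧ ∀ i k : ℤ, C' - t * (s + i) ^ 2 + k ∉ Ioo l u := by
  obtain ⟨k₀, hk₀⟩ := exists_abs_add_intCast_le_half (-(b / (2 * t)))
  set s := -(b / (2 * t)) + k₀ with hs
  have hb : b = 2 * t * (k₀ - s) := by rw [hs]; field_simp; ring
  refine ⟨C + t * (k₀ - s) ^ 2, |s|, abs_nonneg s, hk₀, fun i k => ?_⟩
  obtain ⟨j, hj⟩ := exists_sq_add_intCast_eq_sq_abs_add s i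
  convert h (k₀ + j) k using 2
  rw [← hj, hb]
  push_cast
  ring

/-- Going through the values at `0, -1, 1, -2, 2, -3` (the order in which `(s + i) ^ 2` increases),
each drop is too short to jump over the interval. -/
lemma add_six_mul_le_one (h : QuadAvoids C b t l u) (ht : 0 < t) (h4t : 4 * t < u - l)
    (hlen : 53 / 100 ≤ u - l) : u - l + 6 * t ≤ 1 := by
  obtain ⟨C', s, hs0, hs, hC'⟩ := h.exists_centered ht.ne'
  obtain ⟨k, hk⟩ := exists_add_intCast_mem_Icc (hC' 0)
  simp only [Int.cast_zero, add_zero] at hk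
  obtain ⟨hku, hkl⟩ := hk
  have stays_above (i : ℤ) (hi : l < C' - t * (s + i) ^ 2 + (k + 1)) :
      u ≤ C' - t * (s + i) ^ 2 + (k + 1) := by
    by_contra hlt
    refine hC' i (k + 1) ?_
    push_cast
    exact ⟨hi, not_le.mp hlt⟩
  have hts0 : 0 ≤ t * s := mul_nonneg ht.le hs0
  have hts : t * s ≤ t / 2 := by nlinarith
  have at_neg_one := stays_above (-1) (by push_cast; linarith)
  have at_one := stays_above 1 (by push_cast at at_neg_one ⊢; linarith)
  have at_neg_two := stays_above (-2) (by push_cast at at_one ⊢; linarith)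
  have at_two := stays_above 2 (by push_cast at at_neg_two ⊢; linarith)
  push_cast at at_two
  by_cases hdrop : 5 * t - 10 * (t * s) < u - l
  · have at_neg_three := stays_above (-3) (by push_cast; linarith)
    push_cast at at_neg_three
    linarith
  · by_contra
    refine hC' (-4) (k + 2) ?_
    push_cast
    constructor <;> linarith

lemma two_mul_mul_eq_one (h : QuadAvoids C b t l u) {q : ℤ} (hlow : 1 < u - l + q * t)
    (hup : q * t < u - l) : 2 * t * q = 1 := by
  refine mod_cast h.two_mul_mul_eq (p := 1) ?_
  push_cast
  rw [abs_lt]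
  constructor <;> linarith

lemma t_eq_of_cube_bound (h : QuadAvoids C b t l u) (hlen : 53 / 100 ≤ u - l)
    (h6 : 1 < u - l + 6 * t) (hcube : t ≤ 177 / 250 * (u - l) ^ 3) :
    t = 1 / 2 ∨ (t = 1 / 4 ∧ u - l ≤ 3 / 4) ∨ (t = 1 / 6 ∧ u - l ≤ 2 / 3) := by
  have hle_one := h.sub_le_one
  have t_le_of_len_le (e : ℝ) (he : u - l ≤ e) : t ≤ 177 / 250 * (e ^ 2 * (u - l)) := by
    have : (u - l) ^ 2 ≤ e ^ 2 := by gcongr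
    nlinarith
  by_cases h1 : 1 < u - l + t
  · left
    have := t_le_of_len_le 1 hle_one
    have := h.two_mul_mul_eq_one (q := 1) (by push_cast; linarith) (by push_cast; linarith)
    push_cast at this
    linarith
  by_cases h2 : 1 < u - l + 2 * t
  · right; left
    have h2t : 2 * t < u - l := by
      by_contra
      linarith [t_le_of_len_le (2 / 3) (by linarith)]
    have := h.two_mul_mul_eq_one (q := 2) (by push_cast; linarith) (by push_cast; linarith)
    push_cast at this
    constructor <;> linarith
  by_cases h3 : 1 < u - l + 3 * t
  · right; right
    have h3t : 3 * t < u - l := by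
      by_contra
      linarith [t_le_of_len_le (3 / 5) (by linarith)]
    have := h.two_mul_mul_eq_one (q := 3) (by push_cast; linarith) (by push_cast; linarith)
    push_cast at this
    constructor <;> linarith
  · have h4t : 4 * t < u - l := by
      by_contra
      linarith [t_le_of_len_le (4 / 7) (by linarith)]
    linarith [h.add_six_mul_le_one (by linarith) h4t hlen]

end QuadAvoids

/-! ### Covering by the squares in `x₃` and `x₄` -/

section Covering

lemma exists_sub_mul_sq_mem_Ioo {B l u ν y : ℝ} (hB : 0 ≤ B) (hBlen : 2 * B < u - l)
    (hy : |y| ≤ 1 / 2) (hν : ν ∈ Ioo (l + B * y ^ 2) (u + B * (1 + |y|) ^ 2)) :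
    ∃ m : ℤ, ν - B * (y + m) ^ 2 ∈ Ioo l u := by
  obtain ⟨hl, hu⟩ := hν
  have hs0 := abs_nonneg y
  rw [← sq_abs] at hl
  suffices ∃ m : ℤ, ν - B * (|y| + m) ^ 2 ∈ Ioo l u by
    obtain ⟨m, hm⟩ := this
    obtain ⟨k, hk⟩ := exists_sq_add_intCast_eq_sq_abs_add y m
    exact ⟨k, by rwa [hk]⟩
  have hBs : B * |y| ≤ B / 2 := by nlinarith
  by_cases h0 : ν < u + B * |y| ^ 2
  · exact ⟨0, by push_cast; constructor <;> linarith⟩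
  by_cases h1 : ν < u + B * (1 - |y|) ^ 2
  · exact ⟨-1, by push_cast; constructor <;> linarith⟩
  · exact ⟨1, by push_cast; constructor <;> linarith⟩

/-- For every residual value in `V`, subtracting `a * (X + m) ^ 2 + A * (y + i) ^ 2` never gives a
number in `(0, d)`. The base point `X` may depend on `i`, because the square in `x₃` is completed
after `x₄` has been fixed. -/
def SliceInsoluble (a A d : ℝ) (V : Set ℝ) (y : ℝ) : Prop :=
  ∀ i : ℤ, ∃ X : ℝ, ∀ v ∈ V, ∀ m : ℤ, v - a * (X + m) ^ 2 - A * (y + i) ^ 2 ∉ Ioo 0 d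

namespace SliceInsoluble

variable {a A d y : ℝ} {V W : Set ℝ}

lemma mono (h : SliceInsoluble a A d V y) (hWV : W ⊆ V) : SliceInsoluble a A d W y := fun i =>
  (h i).imp fun _ hX v hv => hX v (hWV hv)

lemma add_intCast (h : SliceInsoluble a A d V y) (k : ℤ) : SliceInsoluble a A d V (y + k) :=
  fun i => by simpa only [Int.cast_add, add_assoc] using h (k + i)

lemma exists_centered (h : SliceInsoluble a A d V y) :
    ∃ k : ℤ, |y + k| ≤ 1 / 2 ∧ SliceInsoluble a A d V (y + k) :=
  (exists_abs_add_intCast_le_half y).imp fun k hk => ⟨hk, h.add_intCast k⟩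

lemma notMem_Ioo (h : SliceInsoluble a A d V y) (ha : 0 ≤ a) (hA : 0 ≤ A) (had : 2 * a < d)
    (hAd : 2 * A < d + 3 / 4 * a) (hy : |y| ≤ 1 / 2) {v : ℝ} (hv : v ∈ V) :
    v ∉ Ioo (a / 4 + A * y ^ 2) (d + a + A * (1 + |y|) ^ 2) := by
  intro hmem
  obtain ⟨i, hi⟩ := exists_sub_mul_sq_mem_Ioo (u := d + a) hA (by linarith) hy hmem
  obtain ⟨X, hX⟩ := h i
  obtain ⟨k, hk⟩ := exists_abs_add_intCast_le_half X
  have hsq : (X + k) ^ 2 ≤ 1 / 4 := by nlinarith [abs_le.mp hk]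
  have hsq' : 1 ≤ (1 + |X + k|) ^ 2 := by nlinarith [abs_nonneg (X + k)]
  obtain ⟨m, hm⟩ := exists_sub_mul_sq_mem_Ioo (l := 0) (u := d) (ν := v - A * (y + i) ^ 2) ha
    (by linarith) hk ⟨by nlinarith [hi.1], by nlinarith [hi.2]⟩
  refine hX v hv (k + m) ?_
  convert hm using 1
  push_cast
  ring

lemma notMem_window (h : SliceInsoluble a A d V y) (ha : 0 ≤ a) (hA : 0 ≤ A) (had : 2 * a < d)
    (hAd : 2 * A < d + 3 / 4 * a) {v : ℝ} (hv : v ∈ V) :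
    v ∉ Ioo ((a + A) / 4) (d + a + A) := by
  obtain ⟨k, hk, hslice⟩ := h.exists_centered
  have hsq : (y + k) ^ 2 ≤ 1 / 4 := by nlinarith [abs_le.mp hk]
  have hsq' : 1 ≤ (1 + |y + k|) ^ 2 := by nlinarith [abs_nonneg (y + k)]
  rintro ⟨hlow, hup⟩
  exact hslice.notMem_Ioo ha hA had hAd hk hv ⟨by nlinarith, by nlinarith⟩

end SliceInsoluble

end Covering

/-! ### Bounds on the parameters -/

/-- The inequalities between the parameters `a`, `A`, `t`, `d` of a reduced form that hold in the
case `(m, K) = (2, 2)`. -/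
structure ParamBounds (a A t d : ℝ) : Prop where
  d_pos : 0 < d
  two_mul_a_lt : 2 * a < d
  d_le : d ≤ 3 * a
  two_mul_A_lt : 2 * A < d + 3 / 4 * a
  le_three_mul_A : d + 3 / 4 * a ≤ 3 * A
  d_pow_five : d ^ 5 = 8 / 3 * a * A * t
  A_le : 3 / 4 * A ≤ t

namespace ParamBounds

variable {a A t d : ℝ}

lemma a_pos (h : ParamBounds a A t d) : 0 < a := by linarith [h.d_pos, h.d_le]

lemma five_twelfths_mul_d_le_A (h : ParamBounds a A t d) : 5 / 12 * d ≤ A := by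
  linarith [h.le_three_mul_A, h.d_le]

lemma A_pos (h : ParamBounds a A t d) : 0 < A := by linarith [h.d_pos, h.five_twelfths_mul_d_le_A]

lemma five_sixteenths_mul_d_le_t (h : ParamBounds a A t d) : 5 / 16 * d ≤ t := by
  linarith [h.A_le, h.five_twelfths_mul_d_le_A]

lemma mul_d_le_window (h : ParamBounds a A t d) : 25 / 16 * d ≤ d + 3 / 4 * (a + A) := by
  linarith [h.d_le, h.five_twelfths_mul_d_le_A]

lemma five_div_mul_sq_le (h : ParamBounds a A t d) : 5 / 36 * d ^ 2 ≤ a * A :=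
  calc 5 / 36 * d ^ 2 = d / 3 * (5 / 12 * d) := by ring
    _ ≤ a * A := mul_le_mul (by linarith [h.d_le]) h.five_twelfths_mul_d_le_A
      (by linarith [h.d_pos]) h.a_pos.le

lemma seven_div_mul_sq_le (h : ParamBounds a A t d) (hd : d ≤ 5 / 4 * (a + A)) :
    7 / 45 * d ^ 2 ≤ a * A := by
  have hd0 := h.d_pos
  have ha := h.a_pos
  have had := h.d_le
  by_cases hsmall : a ≤ 28 / 75 * d
  · calc 7 / 45 * d ^ 2 ≤ a * (4 / 5 * d - a) := by
          nlinarith [mul_nonneg (sub_nonneg.2 had) (sub_nonneg.2 hsmall)]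
      _ ≤ a * A := by gcongr; linarith
  · calc 7 / 45 * d ^ 2 ≤ a * (d / 3 + a / 4) := by nlinarith
      _ ≤ a * A := by gcongr; linarith [h.le_three_mul_A]

lemma mul_t_le (h : ParamBounds a A t d) {κ : ℝ} (hκ : κ * d ^ 2 ≤ a * A) :
    κ * t ≤ 3 / 8 * d ^ 3 := by
  have ht : 0 ≤ t := by linarith [h.d_pos, h.five_sixteenths_mul_d_le_t]
  refine le_of_mul_le_mul_left ?_ (pow_pos h.d_pos 2)
  calc d ^ 2 * (κ * t) = κ * d ^ 2 * t := by ring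
    _ ≤ a * A * t := by gcongr
    _ = d ^ 2 * (3 / 8 * d ^ 3) := by linear_combination (-3 / 8) * h.d_pow_five

lemma t_le (h : ParamBounds a A t d) : t ≤ 27 / 10 * d ^ 3 := by
  linarith [h.mul_t_le h.five_div_mul_sq_le]

lemma lt_d (h : ParamBounds a A t d) {κ e : ℝ} (hκ : κ * d ^ 2 ≤ a * A)
    (he : 3 / 8 * e ^ 3 < κ * t) : e < d := by
  have : e ^ 3 < d ^ 3 := by linarith [h.mul_t_le hκ]
  exact lt_of_pow_lt_pow_left₀ 3 h.d_pos.le this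

lemma d_gt (h : ParamBounds a A t d) : 34 / 100 < d := by
  have hd0 := h.d_pos
  have : d * (5 / 16) ≤ d * (27 / 10 * d ^ 2) := by linarith [h.five_sixteenths_mul_d_le_t, h.t_le]
  nlinarith [le_of_mul_le_mul_left this hd0]

lemma t_le_window_cube (h : ParamBounds a A t d) :
    t ≤ 177 / 250 * (d + 3 / 4 * (a + A)) ^ 3 := by
  have hd0 := h.d_pos
  have hd := h.mul_d_le_window
  calc t ≤ 27 / 10 * d ^ 3 := h.t_le
    _ ≤ 27 / 10 * (16 / 25 * (d + 3 / 4 * (a + A))) ^ 3 := by gcongr; linarith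
    _ ≤ 177 / 250 * (d + 3 / 4 * (a + A)) ^ 3 := by
      have : 0 ≤ (d + 3 / 4 * (a + A)) ^ 3 := pow_nonneg (by linarith) 3
      linarith

lemma t_eq_of_quadAvoids (h : ParamBounds a A t d) {C b : ℝ}
    (hC : QuadAvoids C b t ((a + A) / 4) (d + a + A)) :
    t = 1 / 2 ∨ (t = 1 / 4 ∧ d + 3 / 4 * (a + A) ≤ 3 / 4) ∨
      (t = 1 / 6 ∧ d + 3 / 4 * (a + A) ≤ 2 / 3) := by
  have hd := h.d_gt
  have hwindow := h.mul_d_le_window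
  have hwidth : d + a + A - (a + A) / 4 = d + 3 / 4 * (a + A) := by ring
  rw [← hwidth]
  exact hC.t_eq_of_cube_bound (by linarith) (by linarith [h.five_sixteenths_mul_d_le_t])
    (hwidth ▸ h.t_le_window_cube)

end ParamBounds

/-! ### The residual form -/

/-- What remains of `Q(x₁, n, x₃, x₄, x₅)` after the squares in `x₃` and `x₄` have been completed
and split off. -/
def residualForm (t α β n x₁ x₅ : ℝ) : ℝ :=
  n * x₁ + n ^ 2 * α + n * β * x₅ - t * x₅ ^ 2

/-- The negation of the conclusion for the form with its squares in `x₃` and `x₄` completed. Here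
`n` is the integer `x₂`, and `c₄ + lam * x₅ - μ * n` is the class modulo one of the variable in the
square with coefficient `A`. -/
def Insoluble (a A t d lam α β μ c₁ c₄ c₅ : ℝ) : Prop :=
  ∀ n k₅ : ℤ, SliceInsoluble a A d
    (range fun k₁ : ℤ => residualForm t α β n (c₁ + k₁) (c₅ + k₅))
    (c₄ + lam * (c₅ + k₅) - μ * n)

/-- A point `r` of the class `c₅ + ℤ` in which the residual form for `n = 1` has linear part
`δ * j`, where `j = x₅ - r`, together with one of its values `v` there. -/
structure BasePoint (t α β c₁ c₅ δ r v : ℝ) : Prop where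
  linear_coeff : β = 2 * t * r + δ
  mem_class : ∃ k : ℤ, r = c₅ + k
  eq_value : ∃ k : ℤ, v = residualForm t α β 1 (c₁ + k) r

section Residual

variable {a A t d lam α β μ c₁ c₄ c₅ δ r v v' : ℝ}

lemma residualForm_add (hβ : β = 2 * t * r + δ) (n x j : ℝ) :
    residualForm t α β n x (n * r + j)
      = n * x + n ^ 2 * (α + β * r - t * r ^ 2) + (n * j * δ - t * j ^ 2) := by
  unfold residualForm
  linear_combination n * j * hβ

/-- The substitution `(x₁, x₂) ↦ (-x₁, -x₂)`. -/
lemma Insoluble.neg (H : Insoluble a A t d lam α β μ c₁ c₄ c₅) :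
    Insoluble a A t d lam α (-β) (-μ) (-c₁) c₄ c₅ := by
  intro n k₅
  convert (H (-n) k₅).mono ?_ using 1
  · push_cast; ring
  · rintro _ ⟨k₁, rfl⟩
    exact ⟨-k₁, by simp only [residualForm]; push_cast; ring⟩

lemma Insoluble.residualForm_notMem (H : Insoluble a A t d lam α β μ c₁ c₄ c₅)
    (h : ParamBounds a A t d) (n k₁ k₅ : ℤ) :
    residualForm t α β n (c₁ + k₁) (c₅ + k₅) ∉ Ioo ((a + A) / 4) (d + a + A) :=
  (H n k₅).notMem_window h.a_pos.le h.A_pos.le h.two_mul_a_lt h.two_mul_A_lt ⟨k₁, rfl⟩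

lemma Insoluble.quadAvoids (H : Insoluble a A t d lam α β μ c₁ c₄ c₅)
    (h : ParamBounds a A t d) :
    QuadAvoids (c₁ + α + β * c₅ - t * c₅ ^ 2) (β - 2 * t * c₅) t ((a + A) / 4) (d + a + A) := by
  intro k i
  convert H.residualForm_notMem h 1 i k using 2
  simp only [residualForm]
  push_cast
  ring

namespace BasePoint

lemma slice (B : BasePoint t α β c₁ c₅ δ r v) (H : Insoluble a A t d lam α β μ c₁ c₄ c₅)
    (j : ℤ) :
    SliceInsoluble a A d (range fun i : ℤ => v + i + (j * δ - t * j ^ 2))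
      (c₄ + lam * (r + j) - μ) := by
  obtain ⟨k, rfl⟩ := B.mem_class
  obtain ⟨k₁, rfl⟩ := B.eq_value
  convert (H 1 (k + j)).mono ?_ using 1
  · push_cast; ring
  · rintro _ ⟨i, rfl⟩
    refine ⟨k₁ + i, ?_⟩
    have hj := residualForm_add (α := α) B.linear_coeff 1 (c₁ + (k₁ + i)) j
    have h0 := residualForm_add (α := α) B.linear_coeff 1 (c₁ + k₁) 0
    push_cast
    simp only [one_mul, add_zero, add_assoc] at hj h0 ⊢
    rw [hj, h0]
    ring

lemma value_notMem (B : BasePoint t α β c₁ c₅ δ r v)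
    (H : Insoluble a A t d lam α β μ c₁ c₄ c₅) (h : ParamBounds a A t d) (i j : ℤ) :
    v + i + (j * δ - t * j ^ 2) ∉ Ioo ((a + A) / 4) (d + a + A) :=
  (B.slice H j).notMem_window h.a_pos.le h.A_pos.le h.two_mul_a_lt h.two_mul_A_lt ⟨i, rfl⟩

lemma odd_mul_notMem (B : BasePoint t α β c₁ c₅ δ r v)
    (B' : BasePoint t α (-β) (-c₁) c₅ (-δ) (-r) v')
    (H : Insoluble a A t d lam α β μ c₁ c₄ c₅) (h : ParamBounds a A t d) (l : ℤ) :
    (2 * l + 1) * ((l + 1) * v + l * v') ∉ Ioo ((a + A) / 4) (d + a + A) := by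
  obtain ⟨k, hk⟩ := B.mem_class
  obtain ⟨k', hk'⟩ := B'.mem_class
  obtain ⟨i, rfl⟩ := B.eq_value
  obtain ⟨i', rfl⟩ := B'.eq_value
  have hr : (2 * l + 1) * r = c₅ + (((l + 1) * k - l * k' : ℤ) : ℝ) := by
    push_cast
    linear_combination (l + 1 : ℝ) * hk - (l : ℝ) * hk'
  have hmem := H.residualForm_notMem h (2 * l + 1) ((l + 1) * i + l * i') ((l + 1) * k - l * k')
  rw [← hr] at hmem
  convert hmem using 2
  simp only [residualForm]
  push_cast
  ring

lemma sub_le_value (B : BasePoint t α β c₁ c₅ δ r v)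
    (H : Insoluble a A t d lam α β μ c₁ c₄ c₅) (h : ParamBounds a A t d)
    (hv : d + a + A - 1 ≤ v) (j : ℤ) {e : ℝ} (he : j * δ - t * j ^ 2 = -e)
    (hwindow : e < d + 3 / 4 * (a + A)) : d + a + A - (1 - e) ≤ v := by
  have hmem := B.value_notMem H h 1 j
  rw [he] at hmem
  push_cast at hmem
  by_contra hlt
  exact hmem ⟨by linarith, by linarith⟩

/-- Otherwise the values `v` and `v'` would force `3 * (2 * v + v')` into the window. -/
lemma d_le_five_div_mul (B : BasePoint t α β c₁ c₅ δ r v)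
    (B' : BasePoint t α (-β) (-c₁) c₅ (-δ) (-r) v')
    (H : Insoluble a A t d lam α β μ c₁ c₄ c₅) (h : ParamBounds a A t d) {g : ℝ}
    (hg : (a + A) / 4 < 9 * (d + a + A - g))
    (hv : v ∈ Icc (d + a + A - g) ((a + A) / 4)) (hv' : v' ∈ Icc (d + a + A - g) ((a + A) / 4)) :
    d ≤ 5 / 4 * (a + A) := by
  have hmem := B.odd_mul_notMem B' H h 1
  push_cast at hmem
  by_contra hlt
  exact hmem ⟨by linarith [hv.1, hv'.1], by linarith [hv.2, hv'.2]⟩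

lemma exists_value_mem_Icc (H : Insoluble a A t d lam α β μ c₁ c₄ c₅) (h : ParamBounds a A t d)
    (hβ : β = 2 * t * r + δ) (hr : ∃ k : ℤ, r = c₅ + k) :
    ∃ v, BasePoint t α β c₁ c₅ δ r v ∧ v ∈ Icc (d + a + A - 1) ((a + A) / 4) := by
  obtain ⟨k, rfl⟩ := hr
  have hvalue (i : ℤ) : residualForm t α β 1 c₁ (c₅ + k) + i
      = residualForm t α β 1 (c₁ + i) (c₅ + k) := by
    unfold residualForm; ring
  obtain ⟨i, hi⟩ := exists_add_intCast_mem_Icc (x := residualForm t α β 1 c₁ (c₅ + k))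
    fun i => by simpa only [hvalue, Int.cast_one] using H.residualForm_notMem h 1 i k
  exact ⟨_, ⟨hβ, ⟨k, rfl⟩, ⟨i, hvalue i⟩⟩, hi⟩

lemma exists_pair (H : Insoluble a A t d lam α β μ c₁ c₄ c₅) (h : ParamBounds a A t d)
    (δ : ℝ) {q w : ℤ} (hq : 2 * t * q = 1) (hw : (q : ℝ) / 2 - q * δ = w) :
    ∃ r v v', BasePoint t α β c₁ c₅ δ r v ∧ BasePoint t α (-β) (-c₁) c₅ (-δ) (-r) v' ∧
      v ∈ Icc (d + a + A - 1) ((a + A) / 4) ∧ v' ∈ Icc (d + a + A - 1) ((a + A) / 4) := by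
  have hwidth : 1 / 2 < d + a + A - (a + A) / 4 := by linarith [h.d_gt, h.mul_d_le_window]
  obtain ⟨z, hz⟩ := (H.quadAvoids h).exists_intCast_eq hwidth hq
  obtain ⟨z', hz'⟩ := (H.neg.quadAvoids h).exists_intCast_eq hwidth hq
  have hβ : β = 2 * t * (q * β - q * δ) + δ := by linear_combination (δ - β) * hq
  obtain ⟨v, B, hv⟩ := exists_value_mem_Icc H h hβ
    ⟨z + w, by push_cast; linear_combination hz + hw + c₅ * hq⟩
  obtain ⟨v', B', hv'⟩ := exists_value_mem_Icc (r := -(q * β - q * δ)) (δ := -δ) H.neg h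
    (by linear_combination -hβ)
    ⟨z' + q - w, by push_cast; linear_combination hz' - hw + c₅ * hq⟩
  exact ⟨_, v, v', B, B', hv, hv'⟩

end BasePoint

end Residual

/-! ### The cases `t = 1 / 4` and `t = 1 / 6` -/

namespace Insoluble

variable {a A t d lam α β μ c₁ c₄ c₅ : ℝ}

lemma t_ne_one_fourth (H : Insoluble a A t d lam α β μ c₁ c₄ c₅) (h : ParamBounds a A t d)
    (hwindow : d + 3 / 4 * (a + A) ≤ 3 / 4) : t ≠ 1 / 4 := by
  rintro rfl
  have hd34 := h.d_gt
  have hLd := h.mul_d_le_window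
  obtain ⟨r, v, v', B, B', ⟨hv, hvle⟩, hv', hvle'⟩ :=
    BasePoint.exists_pair H h 0 (q := 2) (w := 1) (by norm_num) (by norm_num)
  have hvge := B.sub_le_value H h hv 1 (e := 1 / 4) (by norm_num) (by linarith)
  have hvge' := B'.sub_le_value H.neg h hv' 1 (e := 1 / 4) (by norm_num) (by linarith)
  have hd : 452 / 1000 < d := h.lt_d h.five_div_mul_sq_le (by norm_num)
  have hdsum := B.d_le_five_div_mul B' H h (by linarith) ⟨hvge, hvle⟩ ⟨hvge', hvle'⟩
  have hd' : 46875 / 100000 < d := h.lt_d (h.seven_div_mul_sq_le hdsum) (by norm_num)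
  linarith

end Insoluble

lemma BasePoint.exists_le_add_mul_sq {a A t d lam α β μ c₁ c₄ c₅ δ r v : ℝ}
    (B : BasePoint t α β c₁ c₅ δ r v) (H : Insoluble a A t d lam α β μ c₁ c₄ c₅)
    (h : ParamBounds a A t d) (hv : v ≤ (a + A) / 4) {j : ℤ} (hj : j * δ - t * j ^ 2 = 0) :
    ∃ k : ℤ, |c₄ + lam * (r + j) - μ + k| ≤ 1 / 2 ∧
      v ≤ a / 4 + A * (c₄ + lam * (r + j) - μ + k) ^ 2 := by
  obtain ⟨k, hk, hslice⟩ := (B.slice H j).exists_centered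
  refine ⟨k, hk, ?_⟩
  set y := c₄ + lam * (r + j) - μ + k
  have hsq' : 1 ≤ (1 + |y|) ^ 2 := by nlinarith [abs_nonneg y]
  have hd := h.d_pos
  have ha := h.a_pos
  have hA := h.A_pos
  by_contra! hlt
  exact hslice.notMem_Ioo ha.le hA.le h.two_mul_a_lt h.two_mul_A_lt hk
    ⟨0, by rw [hj]; simp⟩ ⟨hlt, by nlinarith⟩

lemma Insoluble.t_ne_one_sixth {a A t d lam α β μ c₁ c₄ c₅ : ℝ}
    (H : Insoluble a A t d lam α β μ c₁ c₄ c₅) (h : ParamBounds a A t d) (hlam : |lam| ≤ 1 / 2)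
    (hAt : A ≤ t + A * lam ^ 2) (hwindow : d + 3 / 4 * (a + A) ≤ 2 / 3) : t ≠ 1 / 6 := by
  rintro rfl
  have hLd := h.mul_d_le_window
  have had := h.d_le
  have hA3 := h.le_three_mul_A
  have hd : 395 / 1000 < d := h.lt_d h.five_div_mul_sq_le (by norm_num)
  obtain ⟨r, v, v', B, B', ⟨hv, hvle⟩, hv', hvle'⟩ :=
    BasePoint.exists_pair H h (1 / 6) (q := 3) (w := 1) (by norm_num) (by norm_num)
  have hvge := B.sub_le_value H h hv (-1) (e := 1 / 3) (by norm_num) (by linarith)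
  have hvge' := B'.sub_le_value H.neg h hv' 1 (e := 1 / 3) (by norm_num) (by linarith)
  have hdsum := B.d_le_five_div_mul B' H h (by linarith) ⟨hvge, hvle⟩ ⟨hvge', hvle'⟩
  have hd' : 4104 / 10000 < d := h.lt_d (h.seven_div_mul_sq_le hdsum) (by norm_num)
  have hA : 175 / 1000 < A := by linarith
  have hlam_gt : 21 / 100 < |lam| := by
    by_contra! hle
    have : lam ^ 2 ≤ (21 / 100) ^ 2 := by rw [← sq_abs]; gcongr
    nlinarith
  obtain ⟨k₀, hk₀, hv₀⟩ := B.exists_le_add_mul_sq H h hvle (j := 0) (by norm_num)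
  obtain ⟨k₁, hk₁, hv₁⟩ := B.exists_le_add_mul_sq H h hvle (j := 1) (by norm_num)
  have near_half (y : ℝ) (hy : v ≤ a / 4 + A * y ^ 2) : 1 / 2 - 7 / 100 < |y| := by
    by_contra! hle
    have : y ^ 2 ≤ (1 / 2 - 7 / 100) ^ 2 := by rw [← sq_abs]; gcongr
    nlinarith
  have := abs_lt_of_near_half (k₁ - k₀) (by push_cast; ring) hlam (by norm_num)
    hk₀ (near_half _ hv₀) hk₁ (near_half _ hv₁)
  linarith

/-! ### The case `t = 1 / 2` -/

section Half

variable {a A t d lam α β μ c₁ c₄ c₅ v y : ℝ}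

lemma ParamBounds.two_add_sub_mem_Ioo (h : ParamBounds a A t d) (hd : 5699 / 10000 ≤ d) {s Y : ℝ}
    (hs0 : 0 ≤ s) (hs : s ≤ 1 / 2) (hv : v ≤ 3 / 1000) (hY : A ≤ Y) (hup : d + a + Y ≤ v + 1)
    (hmem : v + 1 - a * (s + 1) ^ 2 - Y ∉ Ioo 0 d) : v + 2 - a * (s - 3) ^ 2 - Y ∈ Ioo 0 d := by
  have had := h.d_le
  have had' := h.two_mul_a_lt
  have ha := h.a_pos
  have hA := h.five_twelfths_mul_d_le_A
  have hsq_le : a * (s + 1) ^ 2 ≤ a * (3 / 2) ^ 2 := by gcongr; linarith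
  have hd_le : d ≤ v + 1 - a * (s + 1) ^ 2 - Y := by
    by_contra! hlt
    exact hmem ⟨by linarith, hlt⟩
  have hs2 : s ≤ 2 / 100 := by
    by_contra! hlt
    have : a * (102 / 100) ^ 2 ≤ a * (s + 1) ^ 2 := by gcongr; linarith
    linarith
  have hsq : (298 / 100) ^ 2 ≤ (s - 3) ^ 2 := by nlinarith
  constructor <;> nlinarith [mul_nonneg ha.le hs0]

lemma ParamBounds.exists_add_sub_mul_sq_mem_Ioo (h : ParamBounds a A t d)
    (hd : 5699 / 10000 ≤ d) {Y : ℝ} (hv : v ≤ 3 / 1000) (hY : A ≤ Y) (hup : d + a + Y ≤ v + 1)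
    (X : ℝ) :
    ∃ k m : ℤ, v + k - a * (X + m) ^ 2 - Y ∈ Ioo 0 d := by
  obtain ⟨m₀, hm₀⟩ := exists_abs_add_intCast_le_half X
  obtain ⟨m₁, hm₁⟩ := exists_sq_add_intCast_eq_sq_abs_add (X + m₀) 1
  obtain ⟨m₂, hm₂⟩ := exists_sq_add_intCast_eq_sq_abs_add (X + m₀) (-3)
  push_cast at hm₁ hm₂
  by_cases hmem : v + 1 - a * (|X + m₀| + 1) ^ 2 - Y ∈ Ioo 0 d
  · exact ⟨1, m₀ + m₁, by push_cast; rwa [← add_assoc, hm₁]⟩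
  · have := h.two_add_sub_mem_Ioo hd (abs_nonneg _) hm₀ hv hY hup hmem
    exact ⟨2, m₀ + m₂, by push_cast; rwa [← add_assoc, hm₂]⟩

namespace SliceInsoluble

variable {V : Set ℝ}

lemma lt_of_add_intCast_mem (hs : SliceInsoluble a A d V y) (h : ParamBounds a A t d)
    (hd : 5699 / 10000 ≤ d) (hV : ∀ k : ℤ, v + k ∈ V)
    (hup : d + a + A * (1 + |y|) ^ 2 ≤ v + 1) : 3 / 1000 < v := by
  by_contra! hv
  obtain ⟨i, hi⟩ := exists_sq_add_intCast_eq_sq_abs_add y 1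
  obtain ⟨X, hX⟩ := hs i
  have hA : A ≤ A * (1 + |y|) ^ 2 :=
    le_mul_of_one_le_right h.A_pos.le (by nlinarith [abs_nonneg y])
  obtain ⟨k, m, hkm⟩ := h.exists_add_sub_mul_sq_mem_Ioo hd hv hA hup X
  refine hX (v + k) (hV k) m ?_
  rw [hi]
  push_cast
  rwa [add_comm |y|]

lemma value_bounds (hs : SliceInsoluble a A d V y) (h : ParamBounds a A t d)
    (hd : 5699 / 10000 ≤ d) (hV : ∀ k : ℤ, v + k ∈ V)
    (hv : v ∈ Icc (d + a + A - 1) ((a + A) / 4)) :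
    3 / 1000 < v ∧ v ≤ a / 4 + 12 / 1000 * A ∧ d + 3 / 4 * a + A ≤ 1 := by
  obtain ⟨k, hy, hs'⟩ := hs.exists_centered
  set y' := y + k
  have ha := h.a_pos
  have hA := h.A_pos
  have had := h.d_le
  have hAd := h.five_twelfths_mul_d_le_A
  have hy0 := abs_nonneg y'
  have hAy : 0 ≤ A * |y'| := mul_nonneg hA.le hy0
  have hAsq : 0 ≤ A * |y'| ^ 2 := by positivity
  have hsq : A * |y'| ^ 2 ≤ A * (1 / 2) ^ 2 := by gcongr
  have notMem (i : ℤ) := hs'.notMem_Ioo ha.le hA.le h.two_mul_a_lt h.two_mul_A_lt hy (hV i)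
  have hle : v ≤ a / 4 + A * |y'| ^ 2 := by
    by_contra! hlt
    exact notMem 0 ⟨by push_cast; rw [← sq_abs]; linarith, by push_cast; linarith [hv.2]⟩
  have hup : d + a + A * (1 + |y'|) ^ 2 ≤ v + 1 := by
    by_contra! hlt
    exact notMem 1 ⟨by push_cast; rw [← sq_abs]; linarith [hv.1], by push_cast; linarith⟩
  have hy_le : |y'| ≤ 107 / 1000 := by
    by_contra! hlt
    have : A * (107 / 1000) ≤ A * |y'| := by gcongr
    linarith
  have hsq_le : A * |y'| ^ 2 ≤ A * (107 / 1000) ^ 2 := by gcongr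
  exact ⟨hs'.lt_of_add_intCast_mem h hd hV hup, by linarith, by linarith⟩

end SliceInsoluble

/-- The multiples `3 * (2 * v + v')`, `5 * (3 * v + 2 * v')`, `7 * (4 * v + 3 * v')` grow too slowly
to jump over the window, but the last one lies above its lower end. -/
lemma Insoluble.t_ne_one_half (H : Insoluble a A t d lam α β μ c₁ c₄ c₅)
    (h : ParamBounds a A t d) : t ≠ 1 / 2 := by
  rintro rfl
  obtain ⟨r, v, v', B, B', hv, hv'⟩ :=
    BasePoint.exists_pair H h (1 / 2) (q := 1) (w := 0) (by norm_num) (by norm_num)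
  have hd : 5699 / 10000 < d := h.lt_d h.five_div_mul_sq_le (by norm_num)
  obtain ⟨hv_gt, hv_le, hsum⟩ :=
    (B.slice H 0).value_bounds h hd.le (fun k => ⟨k, by simp⟩) hv
  obtain ⟨hv_gt', hv_le', -⟩ :=
    (B'.slice H.neg 0).value_bounds h hd.le (fun k => ⟨k, by simp⟩) hv'
  have ha := h.a_pos
  have hA := h.A_pos
  have had := h.two_mul_a_lt
  have triple := B.odd_mul_notMem B' H h 1
  have quintuple := B.odd_mul_notMem B' H h 2
  have septuple := B.odd_mul_notMem B' H h 3
  push_cast at triple quintuple septuple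
  have triple_le : 3 * (2 * v + v') ≤ (a + A) / 4 := by
    by_contra
    exact triple ⟨by linarith, by linarith⟩
  have quintuple_le : 5 * (3 * v + 2 * v') ≤ (a + A) / 4 := by
    by_contra
    exact quintuple ⟨by linarith, by linarith⟩
  exact septuple ⟨by linarith, by linarith⟩

end Half

/-! ### Passage from the reduced form to the residual form -/

lemma ParamBounds.not_insoluble {a A t d lam α β μ c₁ c₄ c₅ : ℝ} (h : ParamBounds a A t d)
    (hlam : |lam| ≤ 1 / 2) (hAt : A ≤ t + A * lam ^ 2) :
    ¬ Insoluble a A t d lam α β μ c₁ c₄ c₅ := by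
  intro H
  rcases h.t_eq_of_quadAvoids (H.quadAvoids h) with ht | ⟨ht, hwindow⟩ | ⟨ht, hwindow⟩
  · exact H.t_ne_one_half h ht
  · exact H.t_ne_one_fourth h hwindow ht
  · exact H.t_ne_one_sixth h hlam hAt hwindow ht

lemma redQ_eq_residualForm_sub {a A : ℝ} (ha : a ≠ 0) (hA : A ≠ 0)
    (t lam h₄ h₅ a₂ a₃ a₄ a₅ x₁ x₂ x₃ x₄ x₅ : ℝ) :
    redQ a A t lam h₄ h₅ a₂ a₃ a₄ a₅ x₁ x₂ x₃ x₄ x₅ =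
      residualForm t (a₂ + a₃ ^ 2 / (4 * a) + (a₄ - a₃ * h₄) ^ 2 / (4 * A))
          (a₅ - a₃ * h₅ - (a₄ - a₃ * h₄) * lam) x₂ x₁ x₅
        - a * (x₃ + h₄ * x₄ + h₅ * x₅ - a₃ * x₂ / (2 * a)) ^ 2
        - A * (x₄ + lam * x₅ - (a₄ - a₃ * h₄) / (2 * A) * x₂) ^ 2 := by
  unfold redQ redPhi residualForm
  field_simp
  ring

lemma exists_insoluble {a A t d lam h₄ h₅ a₂ a₃ a₄ a₅ c₁ c₃ c₄ c₅ : ℝ} (ha : a ≠ 0) (hA : A ≠ 0)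
    (hQ : ∀ k₁ n k₃ k₄ k₅ : ℤ, redQ a A t lam h₄ h₅ a₂ a₃ a₄ a₅
      (c₁ + k₁) n (c₃ + k₃) (c₄ + k₄) (c₅ + k₅) ∉ Ioo 0 d) :
    ∃ α β μ, Insoluble a A t d lam α β μ c₁ c₄ c₅ := by
  refine ⟨a₂ + a₃ ^ 2 / (4 * a) + (a₄ - a₃ * h₄) ^ 2 / (4 * A),
    a₅ - a₃ * h₅ - (a₄ - a₃ * h₄) * lam, (a₄ - a₃ * h₄) / (2 * A), fun n k₅ k₄ =>
    ⟨c₃ + h₄ * (c₄ + k₄) + h₅ * (c₅ + k₅) - a₃ * n / (2 * a), ?_⟩⟩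
  rintro _ ⟨k₁, rfl⟩ k₃
  convert hQ k₁ n k₃ k₄ k₅ using 2
  rw [redQ_eq_residualForm_sub ha hA]
  ring

lemma paramBounds_of_two_two {a A t lam d : ℝ} (ha : 0 < a) (hA : 0 < A) (ht : 0 < t)
    (hlam : |lam| ≤ 1 / 2) (hAt : A ≤ t + A * lam ^ 2)
    (hd : d = ((8 / 3) * a * A * t) ^ ((1 : ℝ) / 5)) (hm : d / a ∈ Ioc 2 3)
    (hK : (d + 3 * a / 4) / A ∈ Ioc 2 3) : ParamBounds a A t d := by
  rw [mem_Ioc, lt_div_iff₀ ha, div_le_iff₀ ha] at hm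
  rw [mem_Ioc, lt_div_iff₀ hA, div_le_iff₀ hA] at hK
  have hlam_sq : A * lam ^ 2 ≤ A * (1 / 2) ^ 2 := by rw [← sq_abs]; gcongr
  refine ⟨by rw [hd]; positivity, hm.1, hm.2, by linarith, by linarith, ?_, by linarith⟩
  rw [hd, ← Real.rpow_natCast, ← Real.rpow_mul (by positivity)]
  norm_num

theorem thm5_general (a A t lam h₄ h₅ a₂ a₃ a₄ a₅ d : ℝ) (m K : ℤ)
    (ha : 0 < a) (hA : 0 < A) (ht : 0 < t) (hlam : |lam| ≤ 1 / 2) (hAC : A ≤ t + A * lam ^ 2)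
    (hd : d = ((8 / 3) * a * A * t) ^ ((1 : ℝ) / 5))
    (hm : (m : ℝ) < d / a ∧ d / a ≤ (m : ℝ) + 1)
    (hK : (K : ℝ) < (d + ((m : ℝ) ^ 2 - 1) * a / 4) / A ∧
          (d + ((m : ℝ) ^ 2 - 1) * a / 4) / A ≤ (K : ℝ) + 1)
    (hmK : m = 2 ∧ K = 2)
    (c₁ c₂ c₃ c₄ c₅ : ℝ) (hc₂ : ∃ n : ℤ, (n : ℝ) = c₂) :
    ∃ x₁ x₂ x₃ x₄ x₅ : ℝ,
      (∃ k : ℤ, x₁ - c₁ = k) ∧ (∃ k : ℤ, x₂ - c₂ = k) ∧ (∃ k : ℤ, x₃ - c₃ = k) ∧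
      (∃ k : ℤ, x₄ - c₄ = k) ∧ (∃ k : ℤ, x₅ - c₅ = k) ∧
      0 < redQ a A t lam h₄ h₅ a₂ a₃ a₄ a₅ x₁ x₂ x₃ x₄ x₅ ∧
      redQ a A t lam h₄ h₅ a₂ a₃ a₄ a₅ x₁ x₂ x₃ x₄ x₅ < d := by
  obtain ⟨rfl, rfl⟩ := hmK
  obtain ⟨n₀, rfl⟩ := hc₂
  have h : ParamBounds a A t d := paramBounds_of_two_two ha hA ht hlam hAC hd
    (by norm_num at hm; exact hm) (by norm_num at hK; exact hK)
  by_contra hno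
  have hQ (k₁ n k₃ k₄ k₅ : ℤ) : redQ a A t lam h₄ h₅ a₂ a₃ a₄ a₅
      (c₁ + k₁) n (c₃ + k₃) (c₄ + k₄) (c₅ + k₅) ∉ Ioo 0 d := fun hmem =>
    hno ⟨_, _, _, _, _, ⟨k₁, by ring⟩, ⟨n - n₀, by push_cast; ring⟩, ⟨k₃, by ring⟩,
      ⟨k₄, by ring⟩, ⟨k₅, by ring⟩, hmem⟩
  obtain ⟨α, β, μ, H⟩ := exists_insoluble ha.ne' hA.ne' hQ
  exact h.not_insoluble hlam hAC H

theorem thm5 (a A t lam h₄ h₅ a₂ a₃ a₄ a₅ d : ℝ) (m K : ℤ)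
    (ha : 0 < a) (hA : 0 < A) (ht : 0 < t)
    (ha₂ : -1/2 < a₂ ∧ a₂ ≤ 1/2) (ha₃ : -1/2 < a₃ ∧ a₃ ≤ 1/2)
    (ha₄ : -1/2 < a₄ ∧ a₄ ≤ 1/2) (ha₅ : -1/2 < a₅ ∧ a₅ ≤ 1/2)
    (hh₄ : -1/2 < h₄ ∧ h₄ ≤ 1/2) (hh₅ : -1/2 < h₅ ∧ h₅ ≤ 1/2)
    (hlam : 0 ≤ lam ∧ lam ≤ 1/2) (hAC : A ≤ t + A * lam^2)
    (hmin_le : ∀ u v w : ℤ, ¬(u = 0 ∧ v = 0 ∧ w = 0) →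
      a ≤ redPhi a A t lam h₄ h₅ (u : ℝ) (v : ℝ) (w : ℝ))
    (hmin_eq : ∃ u v w : ℤ, ¬(u = 0 ∧ v = 0 ∧ w = 0) ∧
      redPhi a A t lam h₄ h₅ (u : ℝ) (v : ℝ) (w : ℝ) = a)
    (hd : d = ((8/3) * a * A * t) ^ ((1 : ℝ)/5))
    (hm : (m : ℝ) < d / a ∧ d / a ≤ (m : ℝ) + 1)
    (hK : (K : ℝ) < (d + ((m : ℝ)^2 - 1) * a / 4) / A ∧
          (d + ((m : ℝ)^2 - 1) * a / 4) / A ≤ (K : ℝ) + 1)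
    (ha' : a < 1/2) (hd1 : d ≤ 1) (had : a + d ≤ 1)
    (hmK : m = 2 ∧ K = 2)
    (c₁ c₂ c₃ c₄ c₅ : ℝ) (hc₂ : ∃ n : ℤ, (n : ℝ) = c₂) :
    ∃ x₁ x₂ x₃ x₄ x₅ : ℝ,
      (∃ k : ℤ, x₁ - c₁ = k) ∧ (∃ k : ℤ, x₂ - c₂ = k) ∧ (∃ k : ℤ, x₃ - c₃ = k) ∧
      (∃ k : ℤ, x₄ - c₄ = k) ∧ (∃ k : ℤ, x₅ - c₅ = k) ∧
      0 < redQ a A t lam h₄ h₅ a₂ a₃ a₄ a₅ x₁ x₂ x₃ x₄ x₅ ∧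
      redQ a A t lam h₄ h₅ a₂ a₃ a₄ a₅ x₁ x₂ x₃ x₄ x₅ < d := by
  exact thm5_general a A t lam h₄ h₅ a₂ a₃ a₄ a₅ d m K ha hA ht
    (abs_le.mpr ⟨by linarith [hlam.1], hlam.2⟩) hAC hd hm hK hmK c₁ c₂ c₃ c₄ c₅ hc₂
end
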